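/- arXiv:1806.02574 — 2 statements merged into one kernel-verified Lean document; each statement's English description precedes it below -/
import Mathlib

section
/- For every integer d ≥ 4 and every set P of d+4 points in general position in ℝ^d, there exist at least ⌊(d+4)/2⌋ distinct unordered partitions of P into two disjoint sets B and C with B ∪ C = P, |B| ≥ ⌊(d+2)/2⌋ and |C| ≥ ⌊(d+2)/2⌋, such that the relative interiors of the convex hulls of B and of C have a common point. -/
/-!
Write `n = d + 4`. A partition of `P` into `B` and `C` is crossing as soon as some affine dependence
`w` of the points is positive exactly on `B` and negative exactly on `C`
(`intrinsicInterior_inter_nonempty`). In general position the space `K` of affine dependences is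
three-dimensional and any three coordinates determine a vector of `K` (`GenPos.isUniformThree`); this
is the Gale dual configuration of `n` vectors in `ℝ³`, and crossing partitions are its splittings by
planes that avoid all of the vectors.

For each point `i`, turning a plane about a line through the `i`-th Gale vector produces a dependence
that vanishes only at `i` and whose other signs are split as evenly as possible
(`exists_balanced_threshold`, `IsUniformThree.exists_balanced`). Perturbing it in both directions gives
two dependences whose positive sets differ exactly in `i`, and all four sides have at least
`⌊n / 2⌋ - 1` points (`IsUniformThree.exists_toggle`).

The indicator vectors of all the balanced positive sets so obtained therefore have every standard basis
vector among their differences, so they span an `n`-dimensional space and there are at least `n` such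
sets (`card_le_card_of_toggle`). A partition arises from at most two of them, which leaves at least
`n / 2` partitions.
-/

noncomputable section

attribute [local instance] Classical.propDecidable

/-- Points of `ℝ^d`. -/
abbrev Pt (d : ℕ) := EuclideanSpace ℝ (Fin d)

/-- A finite point set is in general position in `ℝ^d` if every subset of at most
`d + 1` of its points is affinely independent. -/
def GenPos (d : ℕ) (V : Finset (Pt d)) : Prop :=
  ∀ S : Finset (Pt d), S ⊆ V → S.card ≤ d + 1 →
    AffineIndependent ℝ ((↑) : {x // x ∈ (S : Set (Pt d))} → Pt d)

/-- Two vertex-disjoint point sets form a crossing pair of simplices if the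
relative (intrinsic) interiors of their convex hulls have a common point. -/
def CrossingPair (d : ℕ) (B C : Finset (Pt d)) : Prop :=
  Disjoint B C ∧
    (intrinsicInterior ℝ (convexHull ℝ (B : Set (Pt d))) ∩
      intrinsicInterior ℝ (convexHull ℝ (C : Set (Pt d)))).Nonempty

/-- The set of unordered pairs `{B, C}` of disjoint `d`-element subsets of `V`
whose simplices cross: the crossing pairs of hyperedges. -/
def crossingHyperedgePairs (d : ℕ) (V : Finset (Pt d)) : Set (Sym2 (Finset (Pt d))) :=
  {p | ∃ B C : Finset (Pt d), p = s(B, C) ∧ B ⊆ V ∧ C ⊆ V ∧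
        B.card = d ∧ C.card = d ∧ CrossingPair d B C}

/-- The unordered partitions of `P` into two disjoint parts `B`, `C`, each of
size at least `k`, whose simplices cross (the relative interiors of their convex
hulls meet). -/
def crossingPartitions (d : ℕ) (P : Finset (Pt d)) (k : ℕ) : Set (Sym2 (Finset (Pt d))) :=
  {p | ∃ B C : Finset (Pt d), p = s(B, C) ∧ B ∪ C = P ∧ Disjoint B C ∧
        k ≤ B.card ∧ k ≤ C.card ∧
        (intrinsicInterior ℝ (convexHull ℝ (B : Set (Pt d))) ∩
          intrinsicInterior ℝ (convexHull ℝ (C : Set (Pt d)))).Nonempty}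



/-! ### Balancing the signs in a pencil of vectors -/

open Filter Topology in
/-- Discrete intermediate value theorem behind the rotation argument. As `t` runs from `-∞` to `+∞`,
the signed sum goes from `∑ s k` to `-∑ s k`, and it changes by `±2` at each of the distinct values
`r k`; so right after its first visit to the nonpositive integers it is at least `-2`. -/
theorem exists_balanced_threshold {ι : Type*} (S : Finset ι) (r : ι → ℝ)
    (hr : Set.InjOn r S) (s : ι → ℤ) (hs : ∀ k, s k = 1 ∨ s k = -1) (h0 : 0 ≤ ∑ k ∈ S, s k) :
    ∃ t : ℝ, (∀ k ∈ S, r k ≠ t) ∧ -2 ≤ ∑ k ∈ S, s k * (if r k < t then -1 else 1) ∧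
      ∑ k ∈ S, s k * (if r k < t then -1 else 1) ≤ 0 := by
  rcases S.eq_empty_or_nonempty with rfl | hne
  · exact ⟨0, by simp⟩
  set G : ℝ → ℤ := fun t => ∑ k ∈ S, s k * (if r k ≤ t then -1 else 1) with hG
  -- Past the largest value every sign is flipped, so the sum is nonpositive there.
  obtain ⟨m, hmS, hm⟩ := S.exists_max_image r hne
  have hA : (S.filter fun k => G (r k) ≤ 0).Nonempty := by
    refine ⟨m, Finset.mem_filter.2 ⟨hmS, ?_⟩⟩
    have : G (r m) = -∑ k ∈ S, s k := by
      rw [hG, ← Finset.sum_neg_distrib]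
      exact Finset.sum_congr rfl fun k hk => by rw [if_pos (hm k hk)]; ring
    omega
  -- `r k` is the first value at which the sum becomes nonpositive.
  obtain ⟨k, hk, hkmin⟩ := Finset.exists_min_image _ r hA
  obtain ⟨hkS, hkG⟩ := Finset.mem_filter.1 hk
  have hbefore : 0 ≤ ∑ l ∈ S, s l * (if r l < r k then -1 else 1) := by
    rcases (S.filter fun l => r l < r k).eq_empty_or_nonempty with he | hne'
    · refine h0.trans_eq (Finset.sum_congr rfl fun l hl => ?_)
      rw [if_neg (Finset.filter_eq_empty_iff.1 he hl), mul_one]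
    · obtain ⟨l, hl, hlmax⟩ := Finset.exists_max_image _ r hne'
      obtain ⟨hlS, hlk⟩ := Finset.mem_filter.1 hl
      have hGl : 0 < G (r l) := by
        by_contra! hle
        exact absurd (hkmin l (Finset.mem_filter.2 ⟨hlS, hle⟩)) (not_le.2 hlk)
      refine hGl.le.trans_eq (Finset.sum_congr rfl fun p hp => ?_)
      have : r p ≤ r l ↔ r p < r k :=
        ⟨fun h => h.trans_lt hlk, fun h => hlmax p (Finset.mem_filter.2 ⟨hp, h⟩)⟩
      simp only [this]
  have hjump : ∑ l ∈ S, s l * (if r l < r k then -1 else 1) - G (r k) = 2 * s k := by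
    rw [hG, ← Finset.sum_sub_distrib, Finset.sum_eq_single_of_mem k hkS]
    · simp; ring
    · intro l hl hlk
      have hne : r l ≠ r k := fun h => hlk (hr hl hkS h)
      have : r l < r k ↔ r l ≤ r k := ⟨le_of_lt, fun h => lt_of_le_of_ne h hne⟩
      simp only [this, sub_self]
  -- A threshold slightly above `r k` has the same sum and avoids every value `r l`.
  have hev : ∀ᶠ t in 𝓝[>] (r k), ∀ l ∈ S, (r l ≤ r k ↔ r l < t) ∧ r l ≠ t := by
    rw [Filter.eventually_all_finset]
    intro l _
    rcases le_or_gt (r l) (r k) with h | h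
    · filter_upwards [self_mem_nhdsWithin] with t ht
      have h' : r l < t := lt_of_le_of_lt h ht
      exact ⟨iff_of_true h h', h'.ne⟩
    · filter_upwards [mem_nhdsWithin_of_mem_nhds (Iio_mem_nhds h)] with t ht
      exact ⟨iff_of_false (not_le.2 h) (not_lt.2 (le_of_lt ht)), (ne_of_lt ht).symm⟩
  obtain ⟨t, ht⟩ := hev.exists
  have hGt : ∑ l ∈ S, s l * (if r l < t then -1 else 1) = G (r k) :=
    Finset.sum_congr rfl fun l hl => by simp only [(ht l hl).1]
  refine ⟨t, fun l hl => (ht l hl).2, ?_, ?_⟩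
  · have := hs k
    omega
  · omega

/-- The sign of a real number as an integer `±1`, with the convention `sgn 0 = -1`. -/
def sgn (x : ℝ) : ℤ := if 0 < x then 1 else -1

theorem sgn_eq (x : ℝ) : sgn x = 1 ∨ sgn x = -1 := by
  unfold sgn; split_ifs <;> simp

theorem sgn_neg {x : ℝ} (hx : x ≠ 0) : sgn (-x) = -sgn x := by
  unfold sgn
  rcases lt_or_gt_of_ne hx with h | h
  · simp [h, h.not_gt]
  · simp [h, h.le]

/-- The sign of `u - t v = v (u / v - t)`: it equals the sign of `v` until `t` passes `u / v`, and is
then reversed. -/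
theorem sgn_sub_mul {u v t : ℝ} (hv : v ≠ 0) (ht : u / v ≠ t) :
    u - t * v ≠ 0 ∧ sgn (u - t * v) = sgn v * (if u / v < t then -1 else 1) := by
  have e : u - t * v = v * (u / v - t) := by field_simp
  have h1 : u / v - t ≠ 0 := sub_ne_zero.2 ht
  refine ⟨by rw [e]; exact mul_ne_zero hv h1, ?_⟩
  rw [e]
  unfold sgn
  rcases lt_or_gt_of_ne hv with h | h <;> rcases lt_or_gt_of_ne ht with h' | h'
  · rw [if_pos (mul_pos_of_neg_of_neg h (sub_neg.2 h')), if_neg h.not_gt, if_pos h']; rfl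
  · rw [if_neg (mul_neg_of_neg_of_pos h (sub_pos.2 h')).not_gt, if_neg h.not_gt,
      if_neg h'.not_gt]; rfl
  · rw [if_neg (mul_neg_of_pos_of_neg h (sub_neg.2 h')).not_gt, if_pos h, if_pos h']; rfl
  · rw [if_pos (mul_pos h (sub_pos.2 h')), if_pos h, if_neg h'.not_gt]; rfl

theorem sum_sgn {ι : Type*} [Fintype ι] (x : ι → ℝ) :
    ∑ k, sgn (x k) = ((Finset.univ.filter fun k => 0 < x k).card : ℤ) -
      ((Finset.univ.filter fun k => 0 < x k)ᶜ.card : ℤ) := by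
  simp only [sgn, Finset.sum_ite, Finset.sum_const, Finset.compl_filter]
  simp
  ring

/-! ### Balanced sign patterns in a uniform three-dimensional space -/

/-- The space `K` of vectors indexed by `ι` represents the uniform matroid of rank three: for any
three distinct indices, the corresponding coordinates identify `K` with `ℝ³`. The two fields are the
surjectivity and the injectivity of this identification. -/
structure IsUniformThree {ι : Type*} (K : Submodule ℝ (ι → ℝ)) : Prop where
  exists_mem : ∀ i j k : ι, i ≠ j → i ≠ k → j ≠ k → ∀ a b c : ℝ,
    ∃ w ∈ K, w i = a ∧ w j = b ∧ w k = c
  eq_zero : ∀ i j k : ι, i ≠ j → i ≠ k → j ≠ k → ∀ w ∈ K, w i = 0 → w j = 0 → w k = 0 → w = 0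

/-- The sets `B` of positive coordinates of nowhere-zero vectors of `K` such that `B` and its
complement both have at least `n / 2 - 1` elements, where `n` is the number of indices. The bound on
the complement is written as an upper bound on `#B`. -/
def balancedSides {ι : Type*} [Fintype ι] (K : Submodule ℝ (ι → ℝ)) : Finset (Finset ι) :=
  Finset.univ.filter fun B => Fintype.card ι ≤ 2 * B.card + 2 ∧ 2 * B.card ≤ Fintype.card ι + 2 ∧
    ∃ w ∈ K, (∀ k, w k ≠ 0) ∧ B = Finset.univ.filter fun k => 0 < w k

/-- For every index `i` there is a vector of `K` vanishing exactly at `i` whose numbers of positive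
and negative coordinates differ by at most one. It is found in a pencil `u - t v` in `K`, where
`u` and `v` vanish at `i` and `v` also vanishes at a second index `j`. -/
theorem IsUniformThree.exists_balanced {ι : Type*} [Fintype ι] {K : Submodule ℝ (ι → ℝ)}
    (hK : IsUniformThree K) (hn : 3 ≤ Fintype.card ι) (i : ι) :
    ∃ w ∈ K, w i = 0 ∧ (∀ k, k ≠ i → w k ≠ 0) ∧
      -1 ≤ ∑ k ∈ Finset.univ.erase i, sgn (w k) ∧ ∑ k ∈ Finset.univ.erase i, sgn (w k) ≤ 1 := by
  have h1 : 0 < (Finset.univ.erase i).card := by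
    rw [Finset.card_erase_of_mem (Finset.mem_univ _), Finset.card_univ]; omega
  obtain ⟨j, hj⟩ := Finset.card_pos.1 h1
  have hji : j ≠ i := (Finset.mem_erase.1 hj).1
  have h2 : 0 < ((Finset.univ.erase i).erase j).card := by
    rw [Finset.card_erase_of_mem hj, Finset.card_erase_of_mem (Finset.mem_univ _),
      Finset.card_univ]; omega
  obtain ⟨l, hl⟩ := Finset.card_pos.1 h2
  set S := (Finset.univ.erase i).erase j with hS
  have hSmem : ∀ k, k ∈ S ↔ k ≠ j ∧ k ≠ i := by simp [hS]
  obtain ⟨hlj, hli⟩ := (hSmem l).1 hl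
  obtain ⟨u, huK, hui, huj, hul⟩ := hK.exists_mem i j l hji.symm hli.symm hlj.symm 0 1 0
  obtain ⟨v₀, hv₀K, hv₀i, hv₀j, hv₀l⟩ := hK.exists_mem i j l hji.symm hli.symm hlj.symm 0 0 1
  have hnz : ∀ v ∈ K, v i = 0 → v j = 0 → v l ≠ 0 → ∀ k ∈ S, v k ≠ 0 := by
    intro v hv hvi hvj hvl k hk hvk
    obtain ⟨hkj, hki⟩ := (hSmem k).1 hk
    exact hvl (by rw [hK.eq_zero i j k hji.symm hki.symm hkj.symm v hv hvi hvj hvk]; rfl)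
  obtain ⟨v, hvK, hvi, hvj, hvl, hv0⟩ : ∃ v ∈ K, v i = 0 ∧ v j = 0 ∧ v l ≠ 0 ∧
      0 ≤ ∑ k ∈ S, sgn (v k) := by
    rcases le_total 0 (∑ k ∈ S, sgn (v₀ k)) with h | h
    · exact ⟨v₀, hv₀K, hv₀i, hv₀j, by simp [hv₀l], h⟩
    · refine ⟨-v₀, K.neg_mem hv₀K, by simp [hv₀i], by simp [hv₀j], by simp [hv₀l], ?_⟩
      have : ∑ k ∈ S, sgn ((-v₀) k) = -∑ k ∈ S, sgn (v₀ k) := by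
        rw [← Finset.sum_neg_distrib]
        exact Finset.sum_congr rfl fun k hk =>
          sgn_neg (hnz v₀ hv₀K hv₀i hv₀j (by simp [hv₀l]) k hk)
      omega
  have hvS := hnz v hvK hvi hvj hvl
  -- If two ratios agreed, `u - t v` would vanish at three indices without being zero at `j`.
  have hinj : Set.InjOn (fun k => u k / v k) S := by
    intro k hk m hm hkm
    by_contra hne
    have hki := ((hSmem k).1 hk).2
    have hmi := ((hSmem m).1 hm).2
    have hz := hK.eq_zero i k m (Ne.symm hki) (Ne.symm hmi) hne (u - (u k / v k) • v)
      (K.sub_mem huK (K.smul_mem _ hvK)) (by simp [hui, hvi])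
      (by simp [hvS k hk])
      (by
        rw [Pi.sub_apply, Pi.smul_apply, show u k / v k = u m / v m from hkm]
        simp [hvS m hm])
    have := congrFun hz j
    simp [huj, hvj] at this
  obtain ⟨t, htne, ht1, ht2⟩ := exists_balanced_threshold S (fun k => u k / v k) hinj
    (fun k => sgn (v k)) (fun k => sgn_eq _) hv0
  have hw : ∀ k ∈ S, (u - t • v) k ≠ 0 ∧
      sgn ((u - t • v) k) = sgn (v k) * (if u k / v k < t then -1 else 1) := fun k hk => by
    simpa using sgn_sub_mul (hvS k hk) (htne k hk)
  have hwj : (u - t • v) j = 1 := by simp [huj, hvj]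
  have hsum : ∑ k ∈ Finset.univ.erase i, sgn ((u - t • v) k) =
      1 + ∑ k ∈ S, sgn (v k) * (if u k / v k < t then -1 else 1) := by
    rw [← Finset.add_sum_erase _ _ hj, hwj, Finset.sum_congr rfl fun k hk => (hw k hk).2]
    simp [sgn]
  refine ⟨u - t • v, K.sub_mem huK (K.smul_mem _ hvK), by simp [hui, hvi], ?_, ?_, ?_⟩
  · intro k hk
    by_cases hkj : k = j
    · rw [hkj, hwj]; exact one_ne_zero
    · exact (hw k ((hSmem k).2 ⟨hkj, hk⟩)).1
  · rw [hsum]; omega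
  · rw [hsum]; omega

open Filter Topology in
/-- For every index `i` there are two balanced sides that differ exactly in `i`: perturb a balanced
vector vanishing only at `i` in both directions. -/
theorem IsUniformThree.exists_toggle {ι : Type*} [Fintype ι] {K : Submodule ℝ (ι → ℝ)}
    (hK : IsUniformThree K) (hn : 3 ≤ Fintype.card ι) (i : ι) :
    ∃ B ∈ balancedSides K, ∃ B' ∈ balancedSides K, i ∈ B ∧ i ∉ B' ∧
      ∀ k, k ≠ i → (k ∈ B ↔ k ∈ B') := by
  obtain ⟨w, hwK, hwi, hw0, hlo, hhi⟩ := hK.exists_balanced hn i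
  obtain ⟨z, hzK, hzi⟩ : ∃ z ∈ K, z i = 1 := by
    obtain ⟨f, hfi, hf2⟩ := Finset.exists_subset_card_eq (s := (Finset.univ : Finset ι).erase i) (n := 2)
      (by rw [Finset.card_erase_of_mem (Finset.mem_univ _), Finset.card_univ]; omega)
    obtain ⟨j, l, hjl, rfl⟩ := Finset.card_eq_two.1 hf2
    have hj : j ≠ i := (Finset.mem_erase.1 (hfi (by simp))).1
    have hl : l ≠ i := (Finset.mem_erase.1 (hfi (by simp))).1
    obtain ⟨z, hz, h, -⟩ := hK.exists_mem i j l hj.symm hl.symm hjl 1 0 0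
    exact ⟨z, hz, h⟩
  have hev : ∀ᶠ ε in 𝓝 (0 : ℝ), ∀ k, k ≠ i → (0 < w k + ε * z k ↔ 0 < w k) ∧ w k + ε * z k ≠ 0 := by
    rw [eventually_all]
    intro k
    by_cases hk : k = i
    · simp [hk]
    have hc : Tendsto (fun ε : ℝ => w k + ε * z k) (𝓝 0) (𝓝 (w k)) := by
      have : Continuous (fun ε : ℝ => w k + ε * z k) := by fun_prop
      simpa using this.tendsto 0
    rcases lt_or_gt_of_ne (hw0 k hk) with h | h
    · filter_upwards [hc.eventually (gt_mem_nhds h)] with ε hε _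
      exact ⟨iff_of_false hε.not_gt h.not_gt, hε.ne⟩
    · filter_upwards [hc.eventually (lt_mem_nhds h)] with ε hε _
      exact ⟨iff_of_true hε h, hε.ne'⟩
  have hpert : ∀ ε : ℝ, ε ≠ 0 →
      (∀ k, k ≠ i → (0 < w k + ε * z k ↔ 0 < w k) ∧ w k + ε * z k ≠ 0) →
      (Finset.univ.filter fun k => 0 < (w + ε • z) k) ∈ balancedSides K := by
    intro ε hε h
    have hs : ∑ k, sgn ((w + ε • z) k) =
        sgn ((w + ε • z) i) + ∑ k ∈ Finset.univ.erase i, sgn (w k) := by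
      rw [← Finset.add_sum_erase _ _ (Finset.mem_univ i)]
      congr 1
      refine Finset.sum_congr rfl fun k hk => ?_
      simp [sgn, (h k (Finset.mem_erase.1 hk).1).1]
    rw [sum_sgn] at hs
    have hi := sgn_eq ((w + ε • z) i)
    have hc := Finset.card_add_card_compl (Finset.univ.filter fun k => 0 < (w + ε • z) k)
    refine Finset.mem_filter.2 ⟨Finset.mem_univ _, ?_, ?_, w + ε • z,
      K.add_mem hwK (K.smul_mem _ hzK), fun k => ?_, rfl⟩
    · omega
    · omega
    · by_cases hk : k = i
      · subst hk; simpa [hwi, hzi] using hε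
      · exact (h k hk).2
  have hev' : ∀ᶠ ε in 𝓝 (0 : ℝ), ∀ k, k ≠ i →
      (0 < w k + -ε * z k ↔ 0 < w k) ∧ w k + -ε * z k ≠ 0 := by
    have : Tendsto (fun ε : ℝ => -ε) (𝓝 0) (𝓝 0) := by simpa using (continuous_neg.tendsto (0 : ℝ))
    exact this.eventually hev
  obtain ⟨ε, ⟨h₁, h₂⟩, hε⟩ :=
    (((hev.and hev').filter_mono nhdsWithin_le_nhds).and
      (self_mem_nhdsWithin : Set.Ioi (0 : ℝ) ∈ 𝓝[>] 0)).exists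
  have hε : 0 < ε := hε
  refine ⟨_, hpert ε hε.ne' h₁, _, hpert (-ε) (neg_ne_zero.2 hε.ne') h₂, ?_, ?_, fun k hk => ?_⟩
  · simpa [hwi, hzi] using hε
  · simpa [hwi, hzi] using hε.le
  · rw [Finset.mem_filter, Finset.mem_filter]
    simpa using (h₁ k hk).1.trans (h₂ k hk).1.symm

/-! ### Counting -/

/-- A family of subsets that contains, for each element `i`, two sets differing exactly in `i` has at
least as many members as there are elements: the differences of the corresponding indicator vectors
are the standard basis vectors, so the indicator vectors span `ℚ^ι`. -/
theorem card_le_card_of_toggle {ι : Type*} [Fintype ι] (T : Finset (Finset ι))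
    (h : ∀ i, ∃ B ∈ T, ∃ B' ∈ T, i ∈ B ∧ i ∉ B' ∧ ∀ k, k ≠ i → (k ∈ B ↔ k ∈ B')) :
    Fintype.card ι ≤ T.card := by
  set f : Finset ι → ι → ℚ := fun B k => if k ∈ B then 1 else 0 with hf
  have htop : Submodule.span ℚ (T.image f : Set (ι → ℚ)) = ⊤ := by
    rw [eq_top_iff, ← (Pi.basisFun ℚ ι).span_eq, Submodule.span_le]
    rintro _ ⟨i, rfl⟩
    obtain ⟨B, hB, B', hB', hi, hi', hk⟩ := h i
    have : Pi.basisFun ℚ ι i = f B - f B' := by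
      ext k
      by_cases hki : k = i
      · subst hki; simp [hf, hi, hi']
      · simp [hf, hk k hki, hki]
    rw [this]
    exact Submodule.sub_mem _
      (Submodule.subset_span (Finset.mem_coe.2 (Finset.mem_image_of_mem f hB)))
      (Submodule.subset_span (Finset.mem_coe.2 (Finset.mem_image_of_mem f hB')))
  have := finrank_span_finset_le_card (R := ℚ) (T.image f)
  rw [Set.finrank, htop, finrank_top, Module.finrank_fintype_fun_eq_card] at this
  exact this.trans Finset.card_image_le

/-! ### Crossing simplices and affine dependences -/

/-- A convex combination with positive weights lies in the relative interior of the hull. -/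
theorem sum_mem_intrinsicInterior {d : ℕ} (B : Finset (Pt d)) (hB : B.Nonempty)
    (w : Pt d → ℝ) (hw : ∀ b ∈ B, 0 < w b) (hw1 : ∑ b ∈ B, w b = 1) :
    ∑ b ∈ B, w b • b ∈ intrinsicInterior ℝ (convexHull ℝ (B : Set (Pt d))) := by
  set H := convexHull ℝ (B : Set (Pt d)) with hH
  have hHne : H.Nonempty := by simpa [hH] using hB
  have hconv : Convex ℝ H := convex_convexHull ℝ _
  obtain ⟨_, y, hy, rfl⟩ := Set.Nonempty.intrinsicInterior hconv hHne
  have hyH : (y : Pt d) ∈ H :=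
    (interior_subset hy : y ∈ ((↑) ⁻¹' H : Set (affineSpan ℝ H)))
  have : Nonempty (affineSpan ℝ H) := ⟨y⟩
  obtain ⟨a, ha0, ha1, hay⟩ := Finset.mem_convexHull'.1 hyH
  -- For small `ε`, the point is `(1 - ε) z + ε y` with `z` in the hull and `y` relatively interior;
  -- the homothety with centre `z` and ratio `ε` then carries a neighbourhood of `y` into the hull.
  obtain ⟨m, hm, hmin⟩ := B.exists_min_image w hB
  set ε : ℝ := min (w m) (1 / 2) with hε
  have hε0 : 0 < ε := lt_min (hw m hm) (by norm_num)
  have hε1 : ε < 1 := (min_le_right _ _).trans_lt (by norm_num)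
  have hzH : ∑ b ∈ B, ((w b - ε * a b) / (1 - ε)) • b ∈ H := by
    refine Finset.mem_convexHull'.2 ⟨_, fun b hb => ?_, ?_, rfl⟩
    · have h1 : a b ≤ 1 := ha1 ▸ Finset.single_le_sum ha0 hb
      have h2 : ε * a b ≤ ε := mul_le_of_le_one_right hε0.le h1
      have h3 : ε ≤ w b := (min_le_left _ _).trans (hmin b hb)
      exact div_nonneg (by linarith) (by linarith)
    · rw [← Finset.sum_div, Finset.sum_sub_distrib, ← Finset.mul_sum, hw1, ha1, mul_one]
      exact div_self (by linarith)
  set z : affineSpan ℝ H := ⟨_, subset_affineSpan ℝ H hzH⟩ with hz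
  have hmap : AffineMap.homothety z ε '' ((↑) ⁻¹' H : Set (affineSpan ℝ H)) ⊆ (↑) ⁻¹' H := by
    rintro _ ⟨x, hx, rfl⟩
    have : ((AffineMap.homothety z ε x : affineSpan ℝ H) : Pt d) =
        (1 - ε) • (z : Pt d) + ε • (x : Pt d) := by
      simp [AffineMap.homothety_apply]
      module
    rw [Set.mem_preimage, this]
    exact hconv hzH hx (by linarith) hε0.le (by ring)
  refine ⟨AffineMap.homothety z ε y, interior_mono hmap
    ((AffineMap.homothety_isOpenMap z ε hε0.ne').image_interior_subset _ ⟨y, hy, rfl⟩), ?_⟩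
  have h1 : (1 - ε) • (z : Pt d) = ∑ b ∈ B, (w b - ε * a b) • b := by
    rw [hz, Finset.smul_sum]
    refine Finset.sum_congr rfl fun b _ => ?_
    rw [smul_smul, mul_div_cancel₀ _ (by linarith : 1 - ε ≠ 0)]
  have h2 : ((AffineMap.homothety z ε y : affineSpan ℝ H) : Pt d) =
      (1 - ε) • (z : Pt d) + ε • (y : Pt d) := by
    simp [AffineMap.homothety_apply]
    module
  rw [h2, h1, ← hay, Finset.smul_sum, ← Finset.sum_add_distrib]
  exact Finset.sum_congr rfl fun b _ => by module

/-- The space of affine dependences of the points of `P`. -/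
def dependences {d : ℕ} (P : Finset (Pt d)) : Submodule ℝ (P → ℝ) :=
  LinearMap.ker ((Fintype.linearCombination ℝ (fun _ : P => (1 : ℝ))).prod
    (Fintype.linearCombination ℝ (fun k : P => (k : Pt d))))

theorem mem_dependences {d : ℕ} {P : Finset (Pt d)} {w : P → ℝ} :
    w ∈ dependences P ↔ ∑ k, w k = 0 ∧ ∑ k, w k • (k : Pt d) = 0 := by
  simp [dependences, Fintype.linearCombination_apply]

/-- A dependence vanishing at three points is a dependence of `d + 1` affinely independent points,
hence zero; the rest is a dimension count, since the dependences are the kernel of a linear map from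
`ℝ^(d+4)` to `ℝ × ℝ^d`. -/
theorem GenPos.isUniformThree {d : ℕ} {P : Finset (Pt d)} (hP : P.card = d + 4)
    (hgp : GenPos d P) : IsUniformThree (dependences P) := by
  have hzero : ∀ i j k : P, i ≠ j → i ≠ k → j ≠ k → ∀ w ∈ dependences P,
      w i = 0 → w j = 0 → w k = 0 → w = 0 := by
    intro i j k hij hik hjk w hw hi hj hk
    set T : Finset P := ({i, j, k} : Finset P)ᶜ with hT
    have hTc : T.card = d + 1 := by
      have h3 : ({i, j, k} : Finset P).card = 3 :=
        Finset.card_eq_three.2 ⟨i, j, k, hij, hik, hjk, rfl⟩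
      rw [hT, Finset.card_compl, h3, Fintype.card_coe, hP]; omega
    have hout : ∀ x, x ∉ T → w x = 0 := by
      intro x hx
      simp only [hT, Finset.mem_compl, not_not, Finset.mem_insert, Finset.mem_singleton] at hx
      rcases hx with rfl | rfl | rfl <;> assumption
    have hind := hgp (T.map (Function.Embedding.subtype _))
      (fun x hx => by
        obtain ⟨y, -, rfl⟩ := Finset.mem_map.1 hx
        exact y.2)
      (by rw [Finset.card_map, hTc])
    let e : T ↪ {x // x ∈ ((T.map (Function.Embedding.subtype _) : Finset (Pt d)) : Set (Pt d))} :=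
      ⟨fun x => ⟨((x : P) : Pt d), Finset.mem_coe.2 (Finset.mem_map.2 ⟨x, x.2, rfl⟩)⟩,
        fun x y h => Subtype.ext (Subtype.ext (Subtype.mk.inj h))⟩
    have hind' : AffineIndependent ℝ (fun x : T => ((x : P) : Pt d)) :=
      hind.comp_embedding e
    obtain ⟨hw1, hw2⟩ := mem_dependences.1 hw
    have hT0 := affineIndependent_iff.1 hind' Finset.univ (fun x => w x)
      (by
        rw [Finset.sum_coe_sort T w, ← hw1]
        exact Finset.sum_subset (Finset.subset_univ _) fun x _ hx => hout x hx)
      (by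
        rw [Finset.sum_coe_sort T (fun x => w x • (x : Pt d)), ← hw2]
        exact Finset.sum_subset (Finset.subset_univ _) fun x _ hx => by rw [hout x hx, zero_smul])
    ext x
    by_cases hx : x ∈ T
    · exact hT0 ⟨x, hx⟩ (Finset.mem_univ _)
    · exact hout x hx
  refine ⟨fun i j k hij hik hjk a b c => ?_, hzero⟩
  set ev : dependences P →ₗ[ℝ] (Fin 3 → ℝ) :=
    (LinearMap.funLeft ℝ ℝ ![i, j, k]).comp (dependences P).subtype with hev
  have hinj : Function.Injective ev := by
    rw [← LinearMap.ker_eq_bot, LinearMap.ker_eq_bot']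
    intro w hw
    exact Subtype.ext (hzero i j k hij hik hjk w w.2 (congrFun hw 0) (congrFun hw 1) (congrFun hw 2))
  have hge : 3 ≤ Module.finrank ℝ (dependences P) := by
    set L := (Fintype.linearCombination ℝ (fun _ : P => (1 : ℝ))).prod
      (Fintype.linearCombination ℝ (fun k : P => (k : Pt d)))
    have h1 := LinearMap.finrank_range_add_finrank_ker L
    have h2 := Submodule.finrank_le (LinearMap.range L)
    rw [Module.finrank_fintype_fun_eq_card, Fintype.card_coe, hP] at h1
    rw [Module.finrank_prod, Module.finrank_self, finrank_euclideanSpace_fin] at h2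
    change 3 ≤ Module.finrank ℝ (LinearMap.ker L)
    omega
  have hle := LinearMap.finrank_le_finrank_of_injective hinj
  have heq : Module.finrank ℝ (dependences P) = Module.finrank ℝ (Fin 3 → ℝ) := by
    refine le_antisymm hle ?_
    simpa using hge
  obtain ⟨w, hw⟩ := (LinearMap.injective_iff_surjective_of_finrank_eq_finrank heq).1 hinj ![a, b, c]
  exact ⟨w, w.2, congrFun hw 0, congrFun hw 1, congrFun hw 2⟩

/-- The positive and negative parts of a nowhere-zero affine dependence form a crossing pair: the two
sides of the dependence, normalised to total weight one, are the same point. -/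
theorem intrinsicInterior_inter_nonempty {d : ℕ} {P : Finset (Pt d)} {w : P → ℝ}
    (hw : w ∈ dependences P) (B C : Finset P) (hBne : B.Nonempty) (hdisj : Disjoint B C)
    (hunion : B ∪ C = Finset.univ) (hB : ∀ k ∈ B, 0 < w k)
    (hC : ∀ k ∈ C, w k < 0) (hCne : C.Nonempty) :
    (intrinsicInterior ℝ (convexHull ℝ
        (B.map (Function.Embedding.subtype _) : Set (Pt d))) ∩
      intrinsicInterior ℝ (convexHull ℝ
        (C.map (Function.Embedding.subtype _) : Set (Pt d)))).Nonempty := by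
  obtain ⟨h1, h2⟩ := mem_dependences.1 hw
  rw [← hunion, Finset.sum_union hdisj] at h1 h2
  have hs : 0 < ∑ k ∈ B, w k := Finset.sum_pos hB hBne
  have key : ∀ (D : Finset P) (c : ℝ), D.Nonempty → (∀ k ∈ D, 0 < c * w k) →
      ∑ k ∈ D, c * w k = 1 → c • ∑ k ∈ D, w k • (k : Pt d) ∈
        intrinsicInterior ℝ (convexHull ℝ (D.map (Function.Embedding.subtype _) : Set (Pt d))) := by
    intro D c hD hpos hsum
    set W : Pt d → ℝ := fun x => if h : x ∈ P then c * w ⟨x, h⟩ else 0 with hW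
    have hWk : ∀ k : P, W k = c * w k := fun k => by simp [hW]
    have := sum_mem_intrinsicInterior (D.map (Function.Embedding.subtype _)) (hD.map) W
      (fun b hb => by
        obtain ⟨k, hk, rfl⟩ := Finset.mem_map.1 hb
        exact (hWk k).symm ▸ hpos k hk)
      (by
        rw [Finset.sum_map, ← hsum]
        exact Finset.sum_congr rfl fun k _ => hWk k)
    rw [Finset.sum_map] at this
    convert this using 1
    rw [Finset.smul_sum]
    refine Finset.sum_congr rfl fun k _ => ?_
    rw [smul_smul, ← hWk k]; rfl
  set s := ∑ k ∈ B, w k with hsdef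
  refine ⟨s⁻¹ • ∑ k ∈ B, w k • (k : Pt d), key B s⁻¹ hBne
    (fun k hk => mul_pos (inv_pos.2 hs) (hB k hk)) ?_, ?_⟩
  · rw [← Finset.mul_sum]; exact inv_mul_cancel₀ hs.ne'
  · have hC' := key C (-s⁻¹) hCne
      (fun k hk => mul_pos_of_neg_of_neg (neg_neg_of_pos (inv_pos.2 hs)) (hC k hk))
      (by
        rw [← Finset.mul_sum, show ∑ k ∈ C, w k = -s by linarith, neg_mul_neg]
        exact inv_mul_cancel₀ hs.ne')
    rwa [neg_smul, ← smul_neg, ← eq_neg_of_add_eq_zero_left h2] at hC'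

theorem finite_crossingPartitions (d : ℕ) (P : Finset (Pt d)) (k : ℕ) :
    (crossingPartitions d P k).Finite := by
  refine ((P.powerset ×ˢ P.powerset).image fun q => s(q.1, q.2)).finite_toSet.subset ?_
  rintro _ ⟨B, C, rfl, hU, -⟩
  refine Finset.mem_coe.2 (Finset.mem_image.2 ⟨(B, C), Finset.mem_product.2
    ⟨Finset.mem_powerset.2 ?_, Finset.mem_powerset.2 ?_⟩, rfl⟩)
  · exact hU ▸ Finset.subset_union_left
  · exact hU ▸ Finset.subset_union_right

/-- The unordered partition of `P` into a set of its points and the complement of that set. -/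
def toPartition {d : ℕ} {P : Finset (Pt d)} (B : Finset P) : Sym2 (Finset (Pt d)) :=
  s(B.map (Function.Embedding.subtype _), Bᶜ.map (Function.Embedding.subtype _))

theorem toPartition_mem {d : ℕ} (hd : 4 ≤ d) {P : Finset (Pt d)} (hP : P.card = d + 4)
    {B : Finset P} (hB : B ∈ balancedSides (dependences P)) :
    toPartition B ∈ crossingPartitions d P ((d + 2) / 2) := by
  obtain ⟨-, h1, h2, w, hw, hw0, hBw⟩ := Finset.mem_filter.1 hB
  have hc : Bᶜ.card = P.card - B.card := by rw [Finset.card_compl, Fintype.card_coe]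
  rw [Fintype.card_coe, hP] at h1 h2
  have hBle : B.card ≤ P.card := by simpa using Finset.card_le_univ B
  refine ⟨_, _, rfl, ?_, ?_, ?_, ?_, ?_⟩
  · rw [← Finset.map_union, Finset.union_compl]
    ext x; simp
  · exact (Finset.disjoint_map _).2 disjoint_compl_right
  · rw [Finset.card_map]; omega
  · rw [Finset.card_map]; omega
  · refine intrinsicInterior_inter_nonempty hw B Bᶜ (Finset.card_pos.1 (by omega))
      disjoint_compl_right (Finset.union_compl B) ?_ ?_ (Finset.card_pos.1 (by omega))
    · intro k hk
      rw [hBw] at hk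
      exact (Finset.mem_filter.1 hk).2
    · intro k hk
      rw [Finset.mem_compl, hBw] at hk
      exact lt_of_le_of_ne (not_lt.1 fun h => hk (Finset.mem_filter.2 ⟨Finset.mem_univ _, h⟩))
        (hw0 k)

theorem eq_or_eq_compl_of_toPartition_eq {d : ℕ} {P : Finset (Pt d)} {B B' : Finset P}
    (h : toPartition B = toPartition B') : B = B' ∨ B = B'ᶜ := by
  rcases Sym2.eq_iff.1 h with ⟨h, -⟩ | ⟨h, -⟩
  · exact Or.inl (Finset.map_injective _ h)
  · exact Or.inr (Finset.map_injective _ h)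

/-- Any `d + 4` points in general position in `ℝ^d` admit at least `⌊(d+4)/2⌋`
crossing partitions with both parts of size at least `⌊(d+2)/2⌋`. -/
theorem crossing_partitions_of_d_plus_four
    (d : ℕ) (hd : 4 ≤ d) (P : Finset (Pt d)) (hP : P.card = d + 4)
    (hgp : GenPos d P) :
    ((d + 4) / 2 : ℕ) ≤ (crossingPartitions d P ((d + 2) / 2)).ncard := by
  set T := balancedSides (dependences P)
  have hT : d + 4 ≤ T.card := by
    have hcard : Fintype.card P = d + 4 := by rw [Fintype.card_coe, hP]
    have := card_le_card_of_toggle T fun i =>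
      (hgp.isUniformThree hP).exists_toggle (by omega) i
    omega
  -- A partition comes from at most two balanced sides, one the complement of the other.
  have himage : T.card ≤ 2 * (T.image toPartition).card := by
    refine Finset.card_le_mul_card_image T 2 fun q hq => ?_
    obtain ⟨B', -, rfl⟩ := Finset.mem_image.1 hq
    refine (Finset.card_le_card (t := {B', B'ᶜ}) fun B hB => ?_).trans Finset.card_le_two
    simpa using eq_or_eq_compl_of_toPartition_eq (Finset.mem_filter.1 hB).2
  have hle : (T.image toPartition).card ≤ (crossingPartitions d P ((d + 2) / 2)).ncard := by
    rw [← Set.ncard_coe_finset]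
    refine Set.ncard_le_ncard (fun q hq => ?_) (finite_crossingPartitions d P _)
    obtain ⟨B, hB, rfl⟩ := Finset.mem_image.1 (Finset.mem_coe.1 hq)
    exact toPartition_mem hd hP hB
  omega
end
end

section
/- There exist a constant c > 0 and a natural number d₀ such that for every integer d ≥ d₀ the following holds: for every set P of d+5 points in general position in ℝ^d such that some point of P lies in the convex hull of the remaining d+4 points, there exist at least c · d² distinct unordered partitions of P into two disjoint sets B and C with B ∪ C = P and min{|B|, |C|} ≥ ⌈(d+3)/2⌉, such that the relative interiors of the convex hulls of B and of C have a common point. -/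
/-!
The affine dependences of `P` form a four-dimensional space `V`, and the coefficients of the points
are functionals `e p` on `V` (the Gale dual of `P`). General position of `P` says that no nonzero
dependence has four vanishing coefficients (`galePos_gale`, `finrank_dependences`). A dependence
without zero coefficients splits `P` into its positive and negative sides, and these two sides cross
(`crosses_of_isSection`). So balanced sign patterns of vectors in `V` have to be counted.

*Halving triples.* Let `v` be the point in the convex hull of the others, and ignore the coordinate
`v`. For any two further points `i, j`, the dependences vanishing at `i` and `j` form a plane, and a
discrete intermediate value argument (`exists_balanced`) gives a third point `l` and a nonzero
dependence `x` vanishing on `T = {i, j, l}` that has, up to one, as many positive as negative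
coefficients (`GalePos.exists_halving`). This yields at least `(d + 4).choose 2 / 3` triples `T`.

*Charging.* Since `v` is in the hull of the others, there is `a : V` whose coordinates other than
`v` are all positive (`GalePos.exists_pos`). Choose `b : V` with distinct slopes `e p b / e p a`.
Given a halving triple `T`, make its coordinate of middle slope positive and the other two negative;
the resulting sign pattern `B` is balanced. The closed cone of this pattern contains `x`. A
suitable combination of the three functionals of `T` vanishes on `span {a, b}` and is nonnegative on
the cone; thus in the plane `V / span {a, b}` the vector `x` spans an extreme ray of the image of
the cone (`GalePos.exists_charge`). A cone in a plane has only two such extreme rays, and general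
position recovers `T` from its ray, so each pattern is charged by at most two triples
(`Charge.unique`). The two patterns `B` and `Bᶜ` that give the same partition share at most four
triples, and there are at least `(d + 4).choose 2 / 12 ≥ d ^ 2 / 24` partitions
(`GalePos.choose_two_le`).
-/

noncomputable section

attribute [local instance] Classical.propDecidable

open Module

/-! ### Relative interior points of simplices -/

lemma exists_pos_lt_of_pos {ι : Type*} (s : Finset ι) (w : ι → ℝ) (hw : ∀ i ∈ s, 0 < w i) :
    ∃ δ : ℝ, 0 < δ ∧ δ < 1 ∧ ∀ i ∈ s, δ < w i := by
  have h : ∀ᶠ δ in nhdsWithin (0 : ℝ) (Set.Ioi 0), 0 < δ ∧ δ < 1 ∧ ∀ i ∈ s, δ < w i := by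
    refine Filter.Eventually.and self_mem_nhdsWithin (Filter.Eventually.and ?_ ?_)
    · exact nhdsWithin_le_nhds (Iio_mem_nhds one_pos)
    · rw [Filter.eventually_all_finset]
      exact fun i hi => nhdsWithin_le_nhds (Iio_mem_nhds (hw i hi))
  exact h.exists

/-- A convex combination with positive weights is `δ z + (1 - δ) u` with `z` in the intrinsic
interior and `u` in the hull, and the homothety of ratio `δ` centred at `u` maps interior points to
interior points. -/
lemma mem_intrinsicInterior_convexHull {E : Type*} [NormedAddCommGroup E] [NormedSpace ℝ E]
    [FiniteDimensional ℝ E] (B : Finset E) (hB : B.Nonempty) (w : E → ℝ)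
    (hw : ∀ p ∈ B, 0 < w p) (hsum : ∑ p ∈ B, w p = 1) :
    ∑ p ∈ B, w p • p ∈ intrinsicInterior ℝ (convexHull ℝ (B : Set E)) := by
  set K := convexHull ℝ (B : Set E) with hK
  have hKc : Convex ℝ K := convex_convexHull ℝ _
  have hKne : K.Nonempty := (show (B : Set E).Nonempty from hB).convexHull
  obtain ⟨z, hz⟩ := hKne.intrinsicInterior hKc
  have hzK : z ∈ K := intrinsicInterior_subset hz
  obtain ⟨v, hv0, hv1, hvz⟩ := Finset.mem_convexHull'.1 hzK
  obtain ⟨δ, hδ0, hδ1, hδ⟩ := exists_pos_lt_of_pos B w hw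
  have hδ' : (1 - δ) ≠ 0 := by linarith
  set u : E := ∑ p ∈ B, ((w p - δ * v p) / (1 - δ)) • p with hu
  have huK : u ∈ K := by
    refine Finset.mem_convexHull'.2 ⟨_, ?_, ?_, rfl⟩
    · intro p hp
      have h1 : v p ≤ 1 := hv1 ▸ Finset.single_le_sum (f := v) hv0 hp
      refine div_nonneg ?_ (by linarith)
      nlinarith [hδ p hp]
    · rw [← Finset.sum_div, Finset.sum_sub_distrib, ← Finset.mul_sum, hv1, hsum, mul_one,
        div_self hδ']
  have hx : ∑ p ∈ B, w p • p = u + δ • (z - u) := by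
    have : (1 - δ) • u + δ • z = ∑ p ∈ B, w p • p := by
      rw [hu, ← hvz, Finset.smul_sum, Finset.smul_sum, ← Finset.sum_add_distrib]
      refine Finset.sum_congr rfl fun p _ => ?_
      rw [smul_smul, smul_smul, ← add_smul]
      congr 1
      field_simp
      ring
    rw [← this]; module
  obtain ⟨z', hz', rfl⟩ := mem_intrinsicInterior.1 hz
  have hKs : K ⊆ affineSpan ℝ K := subset_affineSpan ℝ K
  let u' : affineSpan ℝ K := ⟨u, hKs huK⟩
  have : Nonempty (affineSpan ℝ K) := ⟨u'⟩
  let φ := AffineMap.homothety u' δ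
  have hφ : ∀ y, ((φ y : affineSpan ℝ K) : E) = u + δ • ((y : E) - u) := by
    intro y
    simp [φ, AffineMap.homothety_apply, u', add_comm]
  refine mem_intrinsicInterior.2 ⟨φ z', ?_, by rw [hφ, hx]⟩
  refine interior_maximal (t := φ '' interior ((↑) ⁻¹' K)) ?_ ?_ ⟨z', hz', rfl⟩
  · rintro _ ⟨y, hy, rfl⟩
    have hyK : y ∈ ((↑) ⁻¹' K : Set (affineSpan ℝ K)) := interior_subset hy
    change (y : E) ∈ K at hyK
    rw [Set.mem_preimage, hφ]
    have := hKc huK hyK (by linarith : (0:ℝ) ≤ 1 - δ) hδ0.le (by ring)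
    convert this using 1
    module
  · exact AffineMap.homothety_isOpenMap u' δ hδ0.ne' _ isOpen_interior

/-! ### A discrete intermediate value theorem -/

/-- A discrete intermediate value theorem. The functions `t ↦ ε m * (t - s m)` with `ε m ≠ 0`
change sign one at a time, at the distinct values `s m`, and all signs are reversed between `t = -∞`
and `t = +∞`. So at one of the `s l` the numbers of positive and of negative values differ by at
most one. -/
lemma exists_balanced {α : Type*} (M : Finset α) (hM : M.Nonempty) (s ε : α → ℝ)
    (hs : Set.InjOn s M) :
    ∃ l ∈ M, |((M.filter fun m => 0 < ε m * (s l - s m)).card : ℤ) -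
      (M.filter fun m => ε m * (s l - s m) < 0).card| ≤ 1 := by
  set η : α → ℤ := fun m => (SignType.sign (ε m) : ℤ) with hη
  have hη1 : ∀ m, |η m| ≤ 1 := by
    intro m
    rcases lt_trichotomy (ε m) 0 with h | h | h <;> simp [hη, h]
  set rank : α → ℕ := fun m => (M.filter fun a => s a < s m).card with hrank
  have hmono : ∀ a ∈ M, ∀ b ∈ M, s a < s b → rank a < rank b := by
    intro a ha b hb hab
    refine Finset.card_lt_card (Finset.ssubset_iff_of_subset ?_ |>.2 ⟨a, by simp [ha, hab], by simp⟩)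
    intro c hc
    simp only [Finset.mem_filter] at hc ⊢
    exact ⟨hc.1, hc.2.trans hab⟩
  have hlt : ∀ a ∈ M, rank a < M.card := by
    intro a ha
    exact Finset.card_lt_card (Finset.filter_ssubset.2 ⟨a, ha, by simp⟩)
  have hinj : Set.InjOn rank M := by
    intro a ha b hb hab
    rcases lt_trichotomy (s a) (s b) with h | h | h
    · exact absurd hab (hmono a ha b hb h).ne
    · exact hs ha hb h
    · exact absurd hab (hmono b hb a ha h).ne'
  have hsurj : ∀ k < M.card, ∃ l ∈ M, rank l = k := by
    intro k hk
    have := Finset.surjOn_of_injOn_of_card_le (s := M) (t := Finset.range M.card) rank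
      (fun a ha => by simpa using hlt a ha) hinj (by simp)
    obtain ⟨l, hl, h⟩ := this (by simpa using hk : k ∈ (Finset.range M.card : Set ℕ))
    exact ⟨l, hl, h⟩
  -- `G k` is the number of positive minus the number of negative values just before the sign
  -- change of rank `k`.
  set G : ℕ → ℤ := fun k => ∑ m ∈ M, η m * (if rank m < k then 1 else -1) with hG
  have hstep : ∀ l ∈ M, G (rank l + 1) - G (rank l) = 2 * η l := by
    intro l hl
    rw [hG]
    simp only
    rw [← Finset.sum_sub_distrib, Finset.sum_eq_single_of_mem l hl]
    · simp; ring
    · intro m hm hml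
      have : rank m ≠ rank l := fun h => hml (hinj hm hl h)
      by_cases h : rank m < rank l
      · simp [h, h.trans (Nat.lt_succ_self _)]
      · have h' : ¬ rank m < rank l + 1 := by omega
        simp [h, h']
  have hmid : ∀ l ∈ M, G (rank l + 1) + G (rank l) =
      2 * ∑ m ∈ M, η m * (SignType.sign (s l - s m) : ℤ) := by
    intro l hl
    rw [hG]
    simp only
    rw [← Finset.sum_add_distrib, Finset.mul_sum]
    refine Finset.sum_congr rfl fun m hm => ?_
    rcases lt_trichotomy (s m) (s l) with h | h | h
    · have h1 := hmono m hm l hl h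
      simp [h1, h1.trans (Nat.lt_succ_self _), sub_pos.2 h]; ring
    · obtain rfl := hs hm hl h
      simp
    · have h1 := hmono l hl m hm h
      have h2 : ¬ rank m < rank l := by omega
      have h3 : ¬ rank m < rank l + 1 := by omega
      simp [h2, h3, sub_neg.2 h]; ring
  have hcount : ∀ l, ((M.filter fun m => 0 < ε m * (s l - s m)).card : ℤ) -
      (M.filter fun m => ε m * (s l - s m) < 0).card =
      ∑ m ∈ M, η m * (SignType.sign (s l - s m) : ℤ) := by
    intro l
    rw [Finset.card_filter, Finset.card_filter]
    push_cast
    rw [← Finset.sum_sub_distrib]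
    refine Finset.sum_congr rfl fun m _ => ?_
    have : η m * (SignType.sign (s l - s m) : ℤ) = (SignType.sign (ε m * (s l - s m)) : ℤ) := by
      rw [sign_mul]; simp [hη]
    rw [this]
    rcases lt_trichotomy (ε m * (s l - s m)) 0 with h | h | h
    · simp [h, h.not_gt]
    · simp [h]
    · simp [h, h.not_gt]
  by_contra! hcon
  have hbig : ∀ k < M.card, 0 < G k * G (k + 1) := by
    intro k hk
    obtain ⟨l, hl, rfl⟩ := hsurj k hk
    have h1 := hcon l hl
    rw [hcount] at h1
    have h2 := hstep l hl
    have h3 := hmid l hl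
    have h4 := abs_le.1 (hη1 l)
    rcases lt_abs.1 h1 with h | h
    · exact mul_pos (by omega) (by omega)
    · exact mul_pos_of_neg_of_neg (by omega) (by omega)
  have hsame : ∀ k ≤ M.card, 0 < G 0 * G k := by
    intro k
    induction k with
    | zero =>
      intro _
      have := hbig 0 hM.card_pos
      have h0 : G 0 ≠ 0 := fun h => by simp [h] at this
      exact mul_self_pos.2 h0
    | succ k ih =>
      intro hk
      have h1 := ih (by omega)
      have h2 := hbig k (by omega)
      have h3 : 0 < (G 0 * G (k + 1)) * (G k * G k) := by nlinarith [mul_pos h1 h2]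
      exact pos_of_mul_pos_left h3 (mul_self_nonneg _)
  have hends : G M.card = - G 0 := by
    rw [hG]
    simp only
    rw [← Finset.sum_neg_distrib]
    refine Finset.sum_congr rfl fun m hm => ?_
    simp [hlt m hm]
  have := hsame M.card le_rfl
  rw [hends] at this
  nlinarith [mul_self_nonneg (G 0)]

/-! ### Vector configurations of rank four in general position -/

section
variable {V : Type*} [AddCommGroup V] [Module ℝ V] {ι : Type*}

/-- General position for the functionals `e i` on a four-dimensional space: no nonzero vector has
four vanishing coordinates. -/
def GalePos (e : ι → V →ₗ[ℝ] ℝ) : Prop :=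
  ∀ Z : Finset ι, Z.card = 4 → ∀ x : V, (∀ i ∈ Z, e i x = 0) → x = 0

lemma GalePos.eq_zero {e : ι → V →ₗ[ℝ] ℝ} (he : GalePos e) (Z : Finset ι) (hZ : 4 ≤ Z.card)
    (x : V) (hx : ∀ i ∈ Z, e i x = 0) : x = 0 := by
  obtain ⟨Z', hZ', hc⟩ := Finset.exists_subset_card_eq hZ
  exact he Z' hc x fun i hi => hx i (hZ' hi)

lemma exists_sorted (T : Finset ι) (hT : T.card = 3) (r : ι → ℝ) (hr : Set.InjOn r T) :
    ∃ i j l, T = {i, j, l} ∧ r i < r j ∧ r j < r l := by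
  obtain ⟨a, b, c, hab, hac, hbc, rfl⟩ := Finset.card_eq_three.1 hT
  have h1 : r a ≠ r b := fun h => hab (hr (by simp) (by simp) h)
  have h2 : r a ≠ r c := fun h => hac (hr (by simp) (by simp) h)
  have h3 : r b ≠ r c := fun h => hbc (hr (by simp) (by simp) h)
  rcases lt_or_gt_of_ne h1 with h1 | h1 <;> rcases lt_or_gt_of_ne h2 with h2 | h2 <;>
    rcases lt_or_gt_of_ne h3 with h3 | h3
  · exact ⟨a, b, c, rfl, h1, h3⟩
  · exact ⟨a, c, b, by ext; simp; tauto, h2, h3⟩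
  · exact absurd (h1.trans h3) h2.not_gt
  · exact ⟨c, a, b, by ext; simp; tauto, h2, h1⟩
  · exact ⟨b, a, c, by ext; simp; tauto, h1, h2⟩
  · exact absurd (h1.trans h2) h3.not_gt
  · exact ⟨b, c, a, by ext; simp; tauto, h3, h2⟩
  · exact ⟨c, b, a, by ext; simp; tauto, h3, h1⟩

/-- `B` is the strictly positive side of a vector whose coordinates are all nonzero. -/
def IsSection (e : ι → V →ₗ[ℝ] ℝ) (B : Finset ι) : Prop :=
  ∃ y : V, (∀ m ∈ B, 0 < e m y) ∧ ∀ m ∉ B, e m y < 0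

/-- `y` lies in the closed polyhedral cone attached to `B`: the coordinates in `B` are nonnegative
and the others nonpositive, with no condition on the coordinate `v`. -/
def InCone (e : ι → V →ₗ[ℝ] ℝ) (v : ι) (B : Finset ι) (y : V) : Prop :=
  (∀ m, m ≠ v → m ∈ B → 0 ≤ e m y) ∧ ∀ m, m ≠ v → m ∉ B → e m y ≤ 0

/-- The triple `T` is charged to the cone of `B` with coefficient `κ`. The vector `x` spans the
ray of that cone on which the coordinates in `T` vanish, and with `ω(x, y) = f x * g y - g x * f y`
the functional `κ * ω(x, ·)` supports the cone, touching it only where the coordinates in `T`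
vanish. In the projection to the plane with coordinates `(f, g)` this says that `x` spans an
extreme ray of the image of the cone, and the sign of `κ` tells which of the two. -/
structure Charge (e : ι → V →ₗ[ℝ] ℝ) (v : ι) (f g : V →ₗ[ℝ] ℝ) (T B : Finset ι) (κ : ℝ) (x : V) :
    Prop where
  card : T.card = 3
  ne : x ≠ 0
  zero : ∀ m ∈ T, e m x = 0
  cone : InCone e v B x
  κ_ne : κ ≠ 0
  nonneg : ∀ y, InCone e v B y → 0 ≤ κ * (f x * g y - g x * f y)
  face : ∀ y, InCone e v B y → κ * (f x * g y - g x * f y) = 0 → ∀ m ∈ T, e m y = 0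

/-- A cone and a sign of `κ` determine the charged triple. By antisymmetry of `ω` the two supporting
functionals force `ω(x, x') = 0`, so `x'` also lies on the face of `x`; then the coordinates of `x'`
in `T ∪ T'` vanish, which is impossible if that union has four elements. -/
lemma Charge.unique {e : ι → V →ₗ[ℝ] ℝ} (he : GalePos e) {v : ι} {f g : V →ₗ[ℝ] ℝ}
    {T T' B B' : Finset ι} {κ κ' : ℝ} {x x' : V} (h : Charge e v f g T B κ x)
    (h' : Charge e v f g T' B' κ' x') (hB : B = B') (hκ : 0 < κ ↔ 0 < κ') : T = T' := by
  subst hB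
  by_contra hT
  have h1 := h.nonneg x' h'.cone
  have h2 := h'.nonneg x h.cone
  have h3 : f x * g x' - g x * f x' = 0 := by
    rcases lt_or_gt_of_ne h.κ_ne with hk | hk
    · have hk' : κ' < 0 := lt_of_le_of_ne (not_lt.1 (mt hκ.2 hk.not_gt)) h'.κ_ne
      nlinarith [nonpos_of_mul_nonneg_right h1 hk, nonpos_of_mul_nonneg_right h2 hk']
    · have hk' := hκ.1 hk
      nlinarith [nonneg_of_mul_nonneg_right h1 hk, nonneg_of_mul_nonneg_right h2 hk']
  have h4 := h.face x' h'.cone (by rw [h3, mul_zero])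
  refine h'.ne (he.eq_zero (T ∪ T') ?_ x' ?_)
  · by_contra! hlt
    have e1 : T = T ∪ T' := Finset.eq_of_subset_of_card_le Finset.subset_union_left (by
      rw [h.card]; omega)
    have e2 : T' = T ∪ T' := Finset.eq_of_subset_of_card_le Finset.subset_union_right (by
      rw [h'.card]; omega)
    exact hT (e1.trans e2.symm)
  · intro m hm
    rcases Finset.mem_union.1 hm with hm | hm
    · exact h4 m hm
    · exact h'.zero m hm

variable [Fintype ι]

/-- At most four coordinates can be prescribed arbitrarily. -/
lemma GalePos.exists_interp {e : ι → V →ₗ[ℝ] ℝ} (he : GalePos e) (hV : finrank ℝ V = 4)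
    (hι : 4 ≤ Fintype.card ι) (Z : Finset ι) (hZ : Z.card ≤ 4) (τ : ι → ℝ) :
    ∃ x : V, ∀ i ∈ Z, e i x = τ i := by
  obtain ⟨Z', hZZ', -, hc⟩ := Finset.exists_subsuperset_card_eq (Finset.subset_univ Z) hZ
    (by simpa using hι)
  have : FiniteDimensional ℝ V := FiniteDimensional.of_finrank_pos (by omega)
  let f : V →ₗ[ℝ] (Z' → ℝ) := LinearMap.pi fun i => e i
  have hinj : Function.Injective f := by
    rw [injective_iff_map_eq_zero]
    intro x hx
    exact he Z' hc x fun i hi => congrFun hx ⟨i, hi⟩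
  have hsurj : Function.Surjective f :=
    (LinearMap.injective_iff_surjective_of_finrank_eq_finrank (by simp [hV, hc])).1 hinj
  obtain ⟨x, hx⟩ := hsurj fun i => τ i
  exact ⟨x, fun i hi => congrFun hx ⟨i, hZZ' hi⟩⟩

/-- The vanishing coordinates of `x` in `Z` can be given arbitrary signs `τ` without changing the
signs of the nonzero coordinates. -/
lemma GalePos.exists_perturb {e : ι → V →ₗ[ℝ] ℝ} (he : GalePos e) (hV : finrank ℝ V = 4)
    (hι : 4 ≤ Fintype.card ι) (Z : Finset ι) (hZ : Z.card ≤ 4) (τ : ι → ℝ) (x : V)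
    (hx : ∀ i ∈ Z, e i x = 0) :
    ∃ y : V, (∀ i, 0 < e i x → 0 < e i y) ∧ (∀ i, e i x < 0 → e i y < 0) ∧
      ∃ ε : ℝ, 0 < ε ∧ ∀ i ∈ Z, e i y = ε * τ i := by
  obtain ⟨δ, hδ⟩ := he.exists_interp hV hι Z hZ τ
  obtain ⟨ε, hε0, -, hε⟩ := exists_pos_lt_of_pos (Finset.univ.filter fun i => e i x ≠ 0)
    (fun i => |e i x| / (|e i δ| + 1)) (by
      intro i hi
      have : 0 < |e i x| := abs_pos.2 (by simpa using hi)
      positivity)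
  have key : ∀ i, e i x ≠ 0 → |ε * e i δ| < |e i x| := by
    intro i hi
    have h := hε i (by simpa using hi)
    rw [lt_div_iff₀ (by positivity)] at h
    rw [abs_mul, abs_of_pos hε0]
    linarith
  refine ⟨x + ε • δ, ?_, ?_, ε, hε0, ?_⟩
  · intro i hi
    have := (abs_lt.1 (key i hi.ne')).1
    rw [abs_of_pos hi] at this
    simp; linarith
  · intro i hi
    have := (abs_lt.1 (key i hi.ne)).2
    rw [abs_of_neg hi] at this
    simp; linarith
  · intro i hi
    simp [hx i hi, hδ i hi]

/-- The vanishing coordinates of `x` number at most four, so they can be pushed to be positive. -/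
lemma GalePos.exists_pos {e : ι → V →ₗ[ℝ] ℝ} (he : GalePos e) (hV : finrank ℝ V = 4)
    (hι : 4 ≤ Fintype.card ι) (v : ι) (x : V) (hx0 : x ≠ 0) (hx : ∀ i, i ≠ v → 0 ≤ e i x) :
    ∃ a : V, ∀ i, i ≠ v → 0 < e i a := by
  have hc : (Finset.univ.filter fun i => e i x = 0).card ≤ 4 := by
    by_contra! h
    exact hx0 (he.eq_zero _ h.le x (by simp))
  obtain ⟨y, h1, -, ε, hε, h2⟩ := he.exists_perturb hV hι _ hc 1 x (by simp)
  refine ⟨y, fun i hi => ?_⟩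
  rcases (hx i hi).eq_or_lt with h | h
  · rw [h2 i (by simp [← h])]; simpa using hε
  · exact h1 i h

/-- A vector `b` for which the slopes `e i b / e i a` are distinct: each coincidence of slopes is a
proper hyperplane of vectors `b`. -/
lemma GalePos.exists_generic {e : ι → V →ₗ[ℝ] ℝ} (he : GalePos e) (hV : finrank ℝ V = 4)
    (hι : 4 ≤ Fintype.card ι) (v : ι) (a : V) (ha : ∀ i, i ≠ v → 0 < e i a) :
    ∃ b : V, ∀ i j, i ≠ v → j ≠ v → e i b / e i a = e j b / e j a → i = j := by
  have : FiniteDimensional ℝ V := FiniteDimensional.of_finrank_pos (by omega)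
  let I := {p : ι × ι // p.1 ≠ v ∧ p.2 ≠ v ∧ p.1 ≠ p.2}
  obtain ⟨b, hb⟩ := Module.Dual.exists_forall_ne_zero_of_forall_exists
    (K := ℝ) (M := V) (fun p : I => e p.1.2 a • e p.1.1 - e p.1.1 a • e p.1.2) (by
      rintro ⟨⟨i, j⟩, hi, hj, hij⟩
      obtain ⟨x, hx⟩ := he.exists_interp hV hι {i, j} (by
        have := Finset.card_le_two (a := i) (b := j); omega) (fun m => if m = i then 1 else 0)
      have h1 := hx i (by simp)
      have h2 := hx j (by simp)
      refine ⟨x, ?_⟩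
      simp only [if_pos, if_neg hij.symm] at h1 h2
      simp [h1, h2, (ha j hj).ne'])
  refine ⟨b, fun i j hi hj h => ?_⟩
  by_contra hij
  apply hb ⟨(i, j), hi, hj, hij⟩
  rw [div_eq_div_iff (ha i hi).ne' (ha j hj).ne'] at h
  simp; linarith

/-- With `f, g` coordinates on the two-dimensional quotient by `span {a, b}`, every nonzero
functional that vanishes on this span and at a vector `x` outside it is a nonzero multiple of
`y ↦ f x * g y - g x * f y`. The pair `f, g` does not depend on the functional, so the multiples for
different `x` can be compared. -/
lemma exists_alternating (hV : finrank ℝ V = 4) (a b : V)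
    (hab : LinearIndependent ℝ ![a, b]) :
    ∃ f g : V →ₗ[ℝ] ℝ, ∀ ψ : V →ₗ[ℝ] ℝ, ψ ≠ 0 → ψ a = 0 → ψ b = 0 → ∀ x, ψ x = 0 →
      x ∉ Submodule.span ℝ {a, b} →
      ∃ κ : ℝ, κ ≠ 0 ∧ ∀ y, ψ y = κ * (f x * g y - g x * f y) := by
  have : FiniteDimensional ℝ V := FiniteDimensional.of_finrank_pos (by omega)
  set L := Submodule.span ℝ {a, b} with hL
  have hL2 : finrank ℝ L = 2 := by
    have := finrank_span_eq_card hab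
    have hr : Set.range ![a, b] = {a, b} := by ext; simp [eq_comm, or_comm]
    rw [hr] at this
    exact this
  have hq : finrank ℝ (V ⧸ L) = finrank ℝ (ℝ × ℝ) := by
    have := L.finrank_quotient_add_finrank
    simp; omega
  let E := LinearEquiv.ofFinrankEq _ _ hq
  let F : V →ₗ[ℝ] ℝ × ℝ := E.toLinearMap ∘ₗ L.mkQ
  have hker : ∀ y, F y = 0 → y ∈ L := by
    intro y hy
    simpa [F] using hy
  have hsurj : Function.Surjective F := E.surjective.comp L.mkQ_surjective
  refine ⟨LinearMap.fst ℝ ℝ ℝ ∘ₗ F, LinearMap.snd ℝ ℝ ℝ ∘ₗ F, ?_⟩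
  intro ψ hψ hψa hψb x hψx hxL
  obtain ⟨u, hu⟩ := hsurj (1, 0)
  obtain ⟨w, hw⟩ := hsurj (0, 1)
  have hLψ : ∀ y ∈ L, ψ y = 0 := by
    intro y hy
    obtain ⟨s, t, rfl⟩ := Submodule.mem_span_pair.1 hy
    simp [hψa, hψb]
  have hdec : ∀ y, ψ y = (F y).1 * ψ u + (F y).2 * ψ w := by
    intro y
    have h := hLψ (y - (F y).1 • u - (F y).2 • w) (hker _ (by
      simp [hu, hw, Prod.ext_iff]))
    simp at h
    linarith
  have hx0 : F x ≠ 0 := fun h => hxL (hker x h)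
  have hxx := hdec x
  rw [hψx] at hxx
  have hκ : ∃ κ : ℝ, ∀ y, ψ y = κ * ((F x).1 * (F y).2 - (F x).2 * (F y).1) := by
    by_cases hp : (F x).1 = 0
    · have hq : (F x).2 ≠ 0 := fun h => hx0 (Prod.ext hp h)
      rw [hp] at hxx
      have hw0 : ψ w = 0 := by
        rcases mul_eq_zero.1 (by linarith : (F x).2 * ψ w = 0) with h | h
        · exact absurd h hq
        · exact h
      refine ⟨-ψ u / (F x).2, fun y => ?_⟩
      rw [hdec, hw0, hp]; field_simp; ring
    · refine ⟨ψ w / (F x).1, fun y => ?_⟩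
      have : ψ u = - ((F x).2 * ψ w) / (F x).1 := by
        field_simp; linarith
      rw [hdec, this]; field_simp; ring
  obtain ⟨κ, hκ⟩ := hκ
  refine ⟨κ, ?_, hκ⟩
  rintro rfl
  exact hψ (LinearMap.ext fun y => by simp [hκ y])

/-! ### Halving hyperplanes through two coordinates -/

/-- Apart from the coordinate `v`, the vector `x` has as many positive as negative coordinates, or
one more positive than negative. -/
def Halves (e : ι → V →ₗ[ℝ] ℝ) (v : ι) (x : V) : Prop :=
  (Finset.univ.filter fun m => m ≠ v ∧ e m x < 0).card ≤
      (Finset.univ.filter fun m => m ≠ v ∧ 0 < e m x).card ∧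
    (Finset.univ.filter fun m => m ≠ v ∧ 0 < e m x).card ≤
      (Finset.univ.filter fun m => m ≠ v ∧ e m x < 0).card + 1

/-- Every pair of coordinates `i, j` extends to a triple on which some nonzero vector that halves
the remaining coordinates vanishes. The vectors `x` with `e i x = e j x = 0` form a plane; as `x`
moves along a line in it, the other coordinates change sign one at a time. -/
lemma GalePos.exists_halving {e : ι → V →ₗ[ℝ] ℝ} (he : GalePos e) (hV : finrank ℝ V = 4)
    (hι : 4 ≤ Fintype.card ι) (v i j : ι) (hi : i ≠ v) (hj : j ≠ v) (hij : i ≠ j) :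
    ∃ l, l ≠ v ∧ l ≠ i ∧ l ≠ j ∧ ∃ x : V, x ≠ 0 ∧ e i x = 0 ∧ e j x = 0 ∧ e l x = 0 ∧
      Halves e v x := by
  have hvij : ({v, i, j} : Finset ι).card = 3 := by
    rw [Finset.card_eq_three]; exact ⟨v, i, j, hi.symm, hj.symm, hij, rfl⟩
  set M : Finset ι := ({v, i, j} : Finset ι)ᶜ with hM
  have hmemM : ∀ m, m ∈ M ↔ m ≠ v ∧ m ≠ i ∧ m ≠ j := by intro m; simp [hM]
  have hMne : M.Nonempty := by
    rw [← Finset.card_pos, hM, Finset.card_compl]; omega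
  obtain ⟨q, hq⟩ := hMne
  have hq' := (hmemM q).1 hq
  -- The line `x₁ + t • x₀` has constant coordinate `1` at `v`, hence avoids the origin.
  obtain ⟨x₀, hx₀⟩ := he.exists_interp hV hι {q, v, i, j} (Finset.card_le_four)
    (fun m => if m = q then 1 else 0)
  obtain ⟨x₁, hx₁⟩ := he.exists_interp hV hι {v, i, j} (by omega)
    (fun m => if m = v then 1 else 0)
  have hx₀q : e q x₀ = 1 := by rw [hx₀ q (by simp)]; simp
  have hx₀v : e v x₀ = 0 := by rw [hx₀ v (by simp)]; simp [hq'.1.symm]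
  have hx₀i : e i x₀ = 0 := by rw [hx₀ i (by simp)]; simp [hq'.2.1.symm]
  have hx₀j : e j x₀ = 0 := by rw [hx₀ j (by simp)]; simp [hq'.2.2.symm]
  have hx₁v : e v x₁ = 1 := by rw [hx₁ v (by simp)]; simp
  have hx₁i : e i x₁ = 0 := by rw [hx₁ i (by simp)]; simp [hi]
  have hx₁j : e j x₁ = 0 := by rw [hx₁ j (by simp)]; simp [hj]
  have hx₀M : ∀ m ∈ M, e m x₀ ≠ 0 := by
    intro m hm h
    have hm' := (hmemM m).1 hm
    have h0 : x₀ = 0 := he.eq_zero (insert m {v, i, j}) (by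
      rw [Finset.card_insert_of_notMem (by simpa [hM] using hm)]; omega) x₀ (by
        simp [h, hx₀v, hx₀i, hx₀j])
    simp [h0] at hx₀q
  -- `s m` is the parameter at which the coordinate `m` vanishes on the line.
  set s : ι → ℝ := fun m => - e m x₁ / e m x₀ with hs
  have hval : ∀ t : ℝ, ∀ m ∈ M, e m (x₁ + t • x₀) = e m x₀ * (t - s m) := by
    intro t m hm
    have := hx₀M m hm
    simp only [hs, map_add, map_smul, smul_eq_mul]
    field_simp
    ring
  have hne : ∀ t : ℝ, x₁ + t • x₀ ≠ 0 := by
    intro t h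
    have : e v (x₁ + t • x₀) = 1 := by simp [hx₁v, hx₀v]
    simp [h] at this
  have hsinj : Set.InjOn s M := by
    intro m hm m' hm' h
    by_contra hmm
    refine hne (s m) (he.eq_zero {m, m', i, j} ?_ _ ?_)
    · have h1 := (hmemM m).1 hm
      have h2 := (hmemM m').1 hm'
      rw [Finset.card_insert_of_notMem (by simp [hmm, h1]),
        Finset.card_insert_of_notMem (by simp [h2]), Finset.card_pair hij]
    · have h1 := hval (s m) m hm
      have h2 := hval (s m) m' hm'
      rw [← h] at h2
      intro a ha
      simp only [Finset.mem_insert, Finset.mem_singleton] at ha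
      rcases ha with rfl | rfl | rfl | rfl
      · rw [h1]; ring
      · rw [h2]; ring
      · simp [hx₁i, hx₀i]
      · simp [hx₁j, hx₀j]
  obtain ⟨l, hl, hbal⟩ := exists_balanced M ⟨q, hq⟩ s (fun m => e m x₀) hsinj
  set x := x₁ + s l • x₀ with hx
  have hl' := (hmemM l).1 hl
  have hxl : e l x = 0 := by rw [hval _ l hl]; ring
  have hxi : e i x = 0 := by simp [hx, hx₁i, hx₀i]
  have hxj : e j x = 0 := by simp [hx, hx₁j, hx₀j]
  have hpos : (M.filter fun m => 0 < e m x₀ * (s l - s m)) =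
      Finset.univ.filter fun m => m ≠ v ∧ 0 < e m x := by
    ext m
    simp only [Finset.mem_filter, Finset.mem_univ, true_and]
    constructor
    · rintro ⟨hm, h⟩
      exact ⟨((hmemM m).1 hm).1, by rw [hval _ m hm]; exact h⟩
    · rintro ⟨hm, h⟩
      have hmM : m ∈ M := (hmemM m).2 ⟨hm, by rintro rfl; simp [hxi] at h,
        by rintro rfl; simp [hxj] at h⟩
      exact ⟨hmM, by rw [← hval _ m hmM]; exact h⟩
  have hneg : (M.filter fun m => e m x₀ * (s l - s m) < 0) =
      Finset.univ.filter fun m => m ≠ v ∧ e m x < 0 := by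
    ext m
    simp only [Finset.mem_filter, Finset.mem_univ, true_and]
    constructor
    · rintro ⟨hm, h⟩
      exact ⟨((hmemM m).1 hm).1, by rw [hval _ m hm]; exact h⟩
    · rintro ⟨hm, h⟩
      have hmM : m ∈ M := (hmemM m).2 ⟨hm, by rintro rfl; simp [hxi] at h,
        by rintro rfl; simp [hxj] at h⟩
      exact ⟨hmM, by rw [← hval _ m hmM]; exact h⟩
  rw [hpos, hneg, abs_le] at hbal
  refine ⟨l, hl'.1, hl'.2.1, hl'.2.2, ?_⟩
  rcases le_total (Finset.univ.filter fun m => m ≠ v ∧ e m x < 0).card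
      (Finset.univ.filter fun m => m ≠ v ∧ 0 < e m x).card with h | h
  · exact ⟨x, hne _, hxi, hxj, hxl, h, by omega⟩
  · refine ⟨-x, neg_ne_zero.2 (hne _), by simp [hxi], by simp [hxj], by simp [hxl], ?_⟩
    unfold Halves
    simp only [map_neg, neg_lt_zero, neg_pos]
    exact ⟨h, by omega⟩

/-! ### Charging halving triples to balanced sections -/

/-- Sort `T = {i, j, l}` by slope. Making the middle coordinate `j` positive and `i, l` negative
turns a halving vector into a balanced section. The linear relation between the three points
`(e m a, e m b)`, `m ∈ T`, gives a combination `ψ` of `e i, e j, e l` that vanishes at `a` and `b`;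
because `j` is in the middle, its signs match this choice, so `ψ` supports the cone. -/
lemma GalePos.exists_charge {e : ι → V →ₗ[ℝ] ℝ} (he : GalePos e) (hV : finrank ℝ V = 4)
    (hι : 4 ≤ Fintype.card ι) (v : ι) (a b : V) (ha : ∀ i, i ≠ v → 0 < e i a)
    (hb : ∀ i j, i ≠ v → j ≠ v → e i b / e i a = e j b / e j a → i = j)
    (f g : V →ₗ[ℝ] ℝ)
    (hfg : ∀ ψ : V →ₗ[ℝ] ℝ, ψ ≠ 0 → ψ a = 0 → ψ b = 0 → ∀ x, ψ x = 0 →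
      x ∉ Submodule.span ℝ {a, b} →
      ∃ κ : ℝ, κ ≠ 0 ∧ ∀ y, ψ y = κ * (f x * g y - g x * f y))
    (T : Finset ι) (hT : T.card = 3) (hvT : v ∉ T) (x : V) (hx0 : x ≠ 0)
    (hxT : ∀ m ∈ T, e m x = 0) (hx : Halves e v x) :
    ∃ B κ, IsSection e B ∧ (Fintype.card ι - 1) / 2 ≤ B.card ∧
      (Fintype.card ι - 1) / 2 ≤ Bᶜ.card ∧ Charge e v f g T B κ x := by
  obtain ⟨i, j, l, hTe, hij, hjl⟩ := exists_sorted T hT (fun m => e m b / e m a) (by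
    intro p hp q hq h
    exact hb p q (by rintro rfl; exact hvT hp) (by rintro rfl; exact hvT hq) h)
  have hiT : i ∈ T := by simp [hTe]
  have hjT : j ∈ T := by simp [hTe]
  have hlT : l ∈ T := by simp [hTe]
  have hiv : i ≠ v := by rintro rfl; exact hvT hiT
  have hjv : j ≠ v := by rintro rfl; exact hvT hjT
  have hlv : l ≠ v := by rintro rfl; exact hvT hlT
  have hij' : i ≠ j := by rintro rfl; exact lt_irrefl _ hij
  have hjl' : j ≠ l := by rintro rfl; exact lt_irrefl _ hjl
  have hil' : i ≠ l := by rintro rfl; exact lt_irrefl _ (hij.trans hjl)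
  have hai := ha i hiv
  have haj := ha j hjv
  have hal := ha l hlv
  set ri := e i b / e i a with hri
  set rj := e j b / e j a with hrj
  set rl := e l b / e l a with hrl
  have hbi : e i b = ri * e i a := by rw [hri]; field_simp
  have hbj : e j b = rj * e j a := by rw [hrj]; field_simp
  have hbl : e l b = rl * e l a := by rw [hrl]; field_simp
  have hxout : ∀ m, m ∉ T → e m x ≠ 0 := by
    intro m hm h
    refine hx0 (he.eq_zero (insert m T) (by rw [Finset.card_insert_of_notMem hm]; omega) x ?_)
    intro m' hm'
    rcases Finset.mem_insert.1 hm' with rfl | h'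
    · exact h
    · exact hxT _ h'
  obtain ⟨y, hy1, hy2, ε, hε, hy3⟩ := he.exists_perturb hV hι T (by omega)
    (fun m => if m = j then 1 else -1) x hxT
  have hyi : e i y < 0 := by rw [hy3 i hiT]; simp [hij', hε]
  have hyj : 0 < e j y := by rw [hy3 j hjT]; simp [hε]
  have hyl : e l y < 0 := by rw [hy3 l hlT]; simp [hjl'.symm, hε]
  set B : Finset ι := Finset.univ.filter fun m => 0 < e m y with hB
  have hmB : ∀ m, m ∈ B ↔ 0 < e m y := by simp [hB]
  have hcases : ∀ m, (0 < e m y ∧ 0 ≤ e m x) ∨ (e m y < 0 ∧ e m x ≤ 0) := by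
    intro m
    by_cases hm : m ∈ T
    · rw [hxT m hm]
      rw [hTe] at hm
      simp only [Finset.mem_insert, Finset.mem_singleton] at hm
      rcases hm with rfl | rfl | rfl
      · exact Or.inr ⟨hyi, le_rfl⟩
      · exact Or.inl ⟨hyj, le_rfl⟩
      · exact Or.inr ⟨hyl, le_rfl⟩
    · rcases lt_or_gt_of_ne (hxout m hm) with h | h
      · exact Or.inr ⟨hy2 m h, h.le⟩
      · exact Or.inl ⟨hy1 m h, h.le⟩
  have hiB : i ∉ B := by rw [hmB]; exact hyi.not_gt
  have hjB : j ∈ B := by rw [hmB]; exact hyj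
  have hlB : l ∉ B := by rw [hmB]; exact hyl.not_gt
  -- The weights are the slope differences that make `ψ a = ψ b = 0`.
  set ψ : V →ₗ[ℝ] ℝ := ((rl - ri) / e j a) • e j - ((rl - rj) / e i a) • e i
    - ((rj - ri) / e l a) • e l with hψ
  have hψv : ∀ z, ψ z = (rl - ri) / e j a * e j z - (rl - rj) / e i a * e i z
      - (rj - ri) / e l a * e l z := by
    intro z; simp [hψ]
  have c1 : 0 < (rl - ri) / e j a := div_pos (by linarith) haj
  have c2 : 0 < (rl - rj) / e i a := div_pos (by linarith) hai
  have c3 : 0 < (rj - ri) / e l a := div_pos (by linarith) hal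
  have hψ0 : ψ ≠ 0 := by
    obtain ⟨z, hz⟩ := he.exists_interp hV hι T (by omega) (fun m => if m = j then 1 else 0)
    intro h
    have h1 := hψv z
    rw [h, hz i hiT, hz j hjT, hz l hlT] at h1
    simp [hij', hjl'.symm] at h1
    linarith
  have hψa : ψ a = 0 := by
    rw [hψv]; field_simp; ring
  have hψb : ψ b = 0 := by
    rw [hψv, hbi, hbj, hbl]; field_simp; ring
  have hψx : ψ x = 0 := by
    rw [hψv, hxT i hiT, hxT j hjT, hxT l hlT]; ring
  have hxspan : x ∉ Submodule.span ℝ {a, b} := by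
    intro h
    obtain ⟨s, t, hst⟩ := Submodule.mem_span_pair.1 h
    have h1 : (s + t * ri) * e i a = 0 := by
      have := hxT i hiT
      rw [← hst] at this
      simp [hbi] at this; linarith
    have h2 : (s + t * rj) * e j a = 0 := by
      have := hxT j hjT
      rw [← hst] at this
      simp [hbj] at this; linarith
    have h1' := (mul_eq_zero.1 h1).resolve_right hai.ne'
    have h2' := (mul_eq_zero.1 h2).resolve_right haj.ne'
    have ht : t * (rj - ri) = 0 := by linarith
    have ht' : t = 0 := (mul_eq_zero.1 ht).resolve_right (by linarith)
    have hs' : s = 0 := by rw [ht'] at h1'; linarith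
    exact hx0 (by rw [← hst, ht', hs']; simp)
  obtain ⟨κ, hκ, hκψ⟩ := hfg ψ hψ0 hψa hψb x hψx hxspan
  have hterms : ∀ z, InCone e v B z → 0 ≤ (rl - ri) / e j a * e j z ∧
      (rl - rj) / e i a * e i z ≤ 0 ∧ (rj - ri) / e l a * e l z ≤ 0 := by
    intro z hz
    exact ⟨mul_nonneg c1.le (hz.1 j hjv hjB), mul_nonpos_of_nonneg_of_nonpos c2.le (hz.2 i hiv hiB),
      mul_nonpos_of_nonneg_of_nonpos c3.le (hz.2 l hlv hlB)⟩
  have hn : 3 + (Finset.univ.filter fun m => m ≠ v ∧ 0 < e m x).card +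
      (Finset.univ.filter fun m => m ≠ v ∧ e m x < 0).card = Fintype.card ι - 1 := by
    rw [← hT, ← Finset.card_union_of_disjoint, ← Finset.card_union_of_disjoint,
      ← Finset.card_univ, ← Finset.card_erase_of_mem (Finset.mem_univ v)]
    · congr 1
      ext m
      simp only [Finset.mem_union, Finset.mem_filter, Finset.mem_univ, true_and, Finset.mem_erase,
        and_true]
      constructor
      · rintro ((h | h) | h)
        · rintro rfl; exact hvT h
        · exact h.1
        · exact h.1
      · intro h
        by_cases hm : m ∈ T
        · exact Or.inl (Or.inl hm)
        · rcases lt_or_gt_of_ne (hxout m hm) with h' | h'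
          · exact Or.inr ⟨h, h'⟩
          · exact Or.inl (Or.inr ⟨h, h'⟩)
    · rw [Finset.disjoint_left]
      intro m hm hm'
      simp only [Finset.mem_union, Finset.mem_filter, Finset.mem_univ, true_and] at hm hm'
      rcases hm with hm | hm
      · have := hxT m hm; linarith
      · linarith
    · rw [Finset.disjoint_left]
      intro m hm hm'
      simp only [Finset.mem_filter, Finset.mem_univ, true_and] at hm'
      have := hxT m hm; linarith
  have hBcard : (Finset.univ.filter fun m => m ≠ v ∧ 0 < e m x).card + 1 ≤ B.card := by
    rw [← Finset.card_insert_of_notMem (a := j) (by simp [hxT j hjT])]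
    refine Finset.card_le_card fun m hm => ?_
    rcases Finset.mem_insert.1 hm with rfl | hm
    · exact hjB
    · simp only [Finset.mem_filter, Finset.mem_univ, true_and] at hm
      exact (hmB m).2 (hy1 m hm.2)
  have hCcard : (Finset.univ.filter fun m => m ≠ v ∧ e m x < 0).card + 2 ≤ Bᶜ.card := by
    rw [← Finset.card_pair hil', ← Finset.card_union_of_disjoint]
    · refine Finset.card_le_card fun m hm => ?_
      simp only [Finset.mem_union, Finset.mem_filter, Finset.mem_univ, true_and, Finset.mem_insert,
        Finset.mem_singleton] at hm
      rw [Finset.mem_compl]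
      rcases hm with hm | rfl | rfl
      · rw [hmB]; exact (hy2 m hm.2).not_gt
      · exact hiB
      · exact hlB
    · rw [Finset.disjoint_left]
      intro m hm hm'
      simp only [Finset.mem_filter, Finset.mem_univ, true_and, Finset.mem_insert,
        Finset.mem_singleton] at hm hm'
      rcases hm' with rfl | rfl
      · have := hxT m hiT; linarith
      · have := hxT m hlT; linarith
  obtain ⟨hx1, hx2⟩ := hx
  refine ⟨B, κ, ⟨y, fun m hm => (hmB m).1 hm, fun m hm => ?_⟩, by omega, by omega, hT, hx0, hxT,
    ⟨fun m _ hm => ?_, fun m _ hm => ?_⟩, hκ, fun z hz => ?_, fun z hz hz0 => ?_⟩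
  · exact ((hcases m).resolve_left fun h => hm ((hmB m).2 h.1)).1
  · exact ((hcases m).resolve_right fun h => h.1.not_gt ((hmB m).1 hm)).2
  · exact ((hcases m).resolve_left fun h => hm ((hmB m).2 h.1)).2
  · rw [← hκψ, hψv]
    have := hterms z hz
    linarith
  · rw [← hκψ, hψv] at hz0
    obtain ⟨t1, t2, t3⟩ := hterms z hz
    intro m hm
    rw [hTe] at hm
    simp only [Finset.mem_insert, Finset.mem_singleton] at hm
    rcases hm with rfl | rfl | rfl
    · exact (mul_eq_zero.1 (by linarith : (rl - rj) / e m a * e m z = 0)).resolve_left c2.ne'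
    · exact (mul_eq_zero.1 (by linarith : (rl - ri) / e m a * e m z = 0)).resolve_left c1.ne'
    · exact (mul_eq_zero.1 (by linarith : (rj - ri) / e m a * e m z = 0)).resolve_left c3.ne'

/-! ### Counting balanced sections -/

/-- Each triple contains three pairs, and each partition `{B, Bᶜ}` receives at most four triples:
two for the side that contains `v`, two for the sign of `κ`. -/
theorem GalePos.choose_two_le {e : ι → V →ₗ[ℝ] ℝ} (he : GalePos e) (hV : finrank ℝ V = 4)
    (hι : 4 ≤ Fintype.card ι) (v : ι) (x₀ : V) (hx₀ : x₀ ≠ 0) (hx₀v : ∀ i, i ≠ v → 0 ≤ e i x₀) :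
    (Fintype.card ι - 1).choose 2 ≤ 12 * ((Finset.univ.filter fun B : Finset ι =>
      IsSection e B ∧ (Fintype.card ι - 1) / 2 ≤ B.card ∧
      (Fintype.card ι - 1) / 2 ≤ Bᶜ.card).image fun B => s(B, Bᶜ)).card := by
  obtain ⟨a, ha⟩ := he.exists_pos hV hι v x₀ hx₀ hx₀v
  obtain ⟨b, hb⟩ := he.exists_generic hV hι v a ha
  have hab : LinearIndependent ℝ ![a, b] := by
    rw [LinearIndependent.pair_iff]
    intro s t hst
    obtain ⟨i, j, hij, hi, hj⟩ : ∃ i j, i ≠ j ∧ i ≠ v ∧ j ≠ v := by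
      have : 1 < ((Finset.univ : Finset ι).erase v).card := by
        rw [Finset.card_erase_of_mem (Finset.mem_univ v), Finset.card_univ]; omega
      obtain ⟨i, hi, j, hj, hij⟩ := Finset.one_lt_card.1 this
      exact ⟨i, j, hij, Finset.ne_of_mem_erase hi, Finset.ne_of_mem_erase hj⟩
    have h1 : s * e i a + t * e i b = 0 := by simpa using congrArg (e i) hst
    have h2 : s * e j a + t * e j b = 0 := by simpa using congrArg (e j) hst
    have hai := ha i hi
    have haj := ha j hj
    have ht : t * (e i b * e j a - e j b * e i a) = 0 := by linear_combination e j a * h1 - e i a * h2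
    rcases mul_eq_zero.1 ht with ht | ht
    · subst ht
      simp [hai.ne'] at h1
      exact ⟨h1, rfl⟩
    · refine absurd (hb i j hi hj ?_) hij
      rw [div_eq_div_iff hai.ne' haj.ne']; linarith
  obtain ⟨f, g, hfg⟩ := exists_alternating hV a b hab
  set Q := (Finset.univ.filter fun B : Finset ι =>
      IsSection e B ∧ (Fintype.card ι - 1) / 2 ≤ B.card ∧
      (Fintype.card ι - 1) / 2 ≤ Bᶜ.card) with hQ
  have hpair : ∀ S ∈ (Finset.univ.erase v).powersetCard 2, ∃ T : Finset ι, S ⊆ T ∧ T.card = 3 ∧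
      v ∉ T ∧ ∃ x : V, x ≠ 0 ∧ (∀ m ∈ T, e m x = 0) ∧ Halves e v x := by
    intro S hS
    obtain ⟨hS1, hS2⟩ := Finset.mem_powersetCard.1 hS
    obtain ⟨i, j, hij, rfl⟩ := Finset.card_eq_two.1 hS2
    have hi : i ≠ v := Finset.ne_of_mem_erase (hS1 (by simp))
    have hj : j ≠ v := Finset.ne_of_mem_erase (hS1 (by simp))
    obtain ⟨l, hlv, hli, hlj, x, hx0, hxi, hxj, hxl, hx⟩ := he.exists_halving hV hι v i j hi hj hij
    refine ⟨{l, i, j}, Finset.subset_insert _ _, Finset.card_eq_three.2 ⟨l, i, j, hli, hlj, hij, rfl⟩,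
      by simp [hlv.symm, hi.symm, hj.symm], x, hx0, by simp [hxi, hxj, hxl], hx⟩
  choose! τ hτ using hpair
  set 𝒯 := ((Finset.univ.erase v).powersetCard 2).image τ with h𝒯
  have hcount1 : ((Finset.univ.erase v).powersetCard 2).card ≤ 3 * 𝒯.card := by
    refine Finset.card_le_mul_card_image _ _ fun T hT => ?_
    have hT3 : T.card = 3 := by
      obtain ⟨S, hS, rfl⟩ := Finset.mem_image.1 hT
      exact (hτ S hS).2.1
    calc _ ≤ (T.powersetCard 2).card := by
          refine Finset.card_le_card fun S hS => ?_
          obtain ⟨hS2, hST⟩ := Finset.mem_filter.1 hS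
          exact Finset.mem_powersetCard.2 ⟨hST ▸ (hτ S hS2).1, (Finset.mem_powersetCard.1 hS2).2⟩
      _ = 3 := by rw [Finset.card_powersetCard, hT3]; rfl
  have hcharge : ∀ T ∈ 𝒯, ∃ B κ x, B ∈ Q ∧ Charge e v f g T B κ x := by
    intro T hT
    obtain ⟨S, hS, rfl⟩ := Finset.mem_image.1 hT
    obtain ⟨-, hc, hv, x, hx0, hxT, hx⟩ := hτ S hS
    obtain ⟨B, κ, h1, h2, h3, h4⟩ :=
      he.exists_charge hV hι v a b ha hb f g hfg _ hc hv x hx0 hxT hx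
    exact ⟨B, κ, x, by simp [hQ, h1, h2, h3], h4⟩
  choose! β κ ξ hβ hch using hcharge
  have hcount2 : 𝒯.card ≤ ((Q.image fun B => s(B, Bᶜ)) ×ˢ
      (Finset.univ : Finset (Bool × Bool))).card := by
    refine Finset.card_le_card_of_injOn
      (fun T => (s(β T, (β T)ᶜ), decide (v ∈ β T), decide (0 < κ T))) ?_ ?_
    · intro T hT
      simp only [Finset.coe_product, Set.mem_prod, Finset.coe_univ, Set.mem_univ, and_true]
      exact Finset.mem_image_of_mem _ (hβ T hT)
    · intro T hT T' hT' h
      simp only [Prod.mk.injEq, decide_eq_decide] at h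
      obtain ⟨h1, h2, h3⟩ := h
      refine (hch T hT).unique he (hch T' hT') ?_ h3
      rcases Sym2.eq_iff.1 h1 with h | h
      · exact h.1
      · rw [h.1, Finset.mem_compl] at h2
        tauto
  rw [Finset.card_powersetCard, Finset.card_erase_of_mem (Finset.mem_univ v),
    Finset.card_univ] at hcount1
  rw [Finset.card_product] at hcount2
  simp at hcount2
  omega
end

/-! ### The Gale dual of a point set -/

/-- The linear map whose kernel is the space of affine dependences of the points of `P`. -/
def dependenceMap {d : ℕ} (P : Finset (Pt d)) : (P → ℝ) →ₗ[ℝ] ℝ × Pt d :=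
  LinearMap.prod (∑ p : P, LinearMap.proj p)
    (∑ p : P, (LinearMap.proj p : (P → ℝ) →ₗ[ℝ] ℝ).smulRight (p : Pt d))

lemma dependenceMap_apply {d : ℕ} (P : Finset (Pt d)) (w : P → ℝ) :
    dependenceMap P w = (∑ p : P, w p, ∑ p : P, w p • (p : Pt d)) := by
  simp [dependenceMap]

/-- The Gale dual of `P`, as a family of functionals: `gale P p` reads off the coefficient of `p` in
an affine dependence of `P`. -/
def gale {d : ℕ} (P : Finset (Pt d)) (p : P) : LinearMap.ker (dependenceMap P) →ₗ[ℝ] ℝ :=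
  LinearMap.proj p ∘ₗ (LinearMap.ker (dependenceMap P)).subtype

lemma gale_apply {d : ℕ} (P : Finset (Pt d)) (p : P) (x : LinearMap.ker (dependenceMap P)) :
    gale P p x = x.1 p := rfl

lemma sum_eq_zero_of_mem_ker {d : ℕ} {P : Finset (Pt d)} (x : LinearMap.ker (dependenceMap P)) :
    ∑ p : P, x.1 p = 0 ∧ ∑ p : P, x.1 p • (p : Pt d) = 0 := by
  have h := LinearMap.mem_ker.1 x.2
  rw [dependenceMap_apply, Prod.ext_iff] at h
  exact h

/-- A dependence with four vanishing coefficients is a dependence of `d + 1` points. -/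
lemma galePos_gale {d : ℕ} {P : Finset (Pt d)} (hP : P.card = d + 5) (hG : GenPos d P) :
    GalePos (gale P) := by
  intro Z hZ x hx
  set S : Finset (Pt d) := Zᶜ.map (Function.Embedding.subtype _) with hS
  have hSP : S ⊆ P := by
    intro p hp
    obtain ⟨q, -, rfl⟩ := Finset.mem_map.1 hp
    exact q.2
  have hScard : S.card = d + 1 := by
    rw [hS, Finset.card_map, Finset.card_compl, Fintype.card_coe]; omega
  have hind : AffineIndependent ℝ (Subtype.val : {p // p ∈ S} → Pt d) := hG S hSP hScard.le
  obtain ⟨h1, h2⟩ := sum_eq_zero_of_mem_ker x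
  set W : Pt d → ℝ := fun p => if h : p ∈ P then x.1 ⟨p, h⟩ else 0 with hW
  have hWx : ∀ q : P, W q = x.1 q := by intro q; simp [hW]
  have hz : ∀ q ∈ Z, x.1 q = 0 := hx
  have s1 : ∑ p : {p // p ∈ S}, W p = 0 := by
    rw [Finset.sum_coe_sort S W, hS, Finset.sum_map, ← h1, ← Finset.sum_compl_add_sum Z,
      Finset.sum_eq_zero (s := Z) hz, add_zero]
    exact Finset.sum_congr rfl fun q _ => hWx q
  have s2 : ∑ p : {p // p ∈ S}, W p • (p : Pt d) = 0 := by
    rw [Finset.sum_coe_sort S (fun p => W p • p), hS, Finset.sum_map, ← h2,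
      ← Finset.sum_compl_add_sum Z,
      Finset.sum_eq_zero (s := Z) (fun q hq => by rw [hz q hq, zero_smul]), add_zero]
    exact Finset.sum_congr rfl fun q _ => by
      rw [← hWx q]; rfl
  have h3 := affineIndependent_iff.1 hind Finset.univ (fun p => W p) s1 s2
  refine Subtype.ext (funext fun q => ?_)
  by_cases hq : q ∈ Z
  · exact hz q hq
  · have hqS : (q : Pt d) ∈ S := Finset.mem_map.2 ⟨q, Finset.mem_compl.2 hq, rfl⟩
    have := h3 ⟨q, hqS⟩ (Finset.mem_univ _)
    rw [← hWx q]; exact this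

lemma finrank_dependences {d : ℕ} {P : Finset (Pt d)} (hP : P.card = d + 5) (hG : GenPos d P) :
    finrank ℝ (LinearMap.ker (dependenceMap P)) = 4 := by
  apply le_antisymm
  · obtain ⟨Z, -, hZ⟩ := Finset.exists_subset_card_eq (s := (Finset.univ : Finset P)) (n := 4)
      (by rw [Finset.card_univ, Fintype.card_coe]; omega)
    let f : LinearMap.ker (dependenceMap P) →ₗ[ℝ] (Z → ℝ) := LinearMap.pi fun i => gale P i
    have hinj : Function.Injective f := by
      rw [injective_iff_map_eq_zero]
      intro x hx
      exact galePos_gale hP hG Z hZ x fun i hi => congrFun hx ⟨i, hi⟩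
    simpa [hZ] using LinearMap.finrank_le_finrank_of_injective hinj
  · have h1 := LinearMap.finrank_range_add_finrank_ker (dependenceMap P)
    have h2 := (LinearMap.range (dependenceMap P)).finrank_le
    simp [hP] at h1 h2
    omega

/-- Separating the positive from the negative terms of an affine dependence and normalising gives
the same point as a positive convex combination of either side. -/
lemma crosses_of_isSection {d : ℕ} {P : Finset (Pt d)} {B : Finset P} (hB : IsSection (gale P) B)
    (hB0 : B.Nonempty) (hC0 : Bᶜ.Nonempty) :
    (intrinsicInterior ℝ (convexHull ℝ
        ((B.map (Function.Embedding.subtype _) : Finset (Pt d)) : Set (Pt d))) ∩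
      intrinsicInterior ℝ (convexHull ℝ
        ((Bᶜ.map (Function.Embedding.subtype _) : Finset (Pt d)) : Set (Pt d)))).Nonempty := by
  obtain ⟨y, hy1, hy2⟩ := hB
  obtain ⟨h1, h2⟩ := sum_eq_zero_of_mem_ker y
  simp only [gale_apply] at hy1 hy2
  set W : Pt d → ℝ := fun p => if h : p ∈ P then y.1 ⟨p, h⟩ else 0 with hW
  have hWy : ∀ q : P, W q = y.1 q := by intro q; simp [hW]
  set s : ℝ := ∑ q ∈ B, y.1 q with hs
  have hs0 : 0 < s := Finset.sum_pos hy1 hB0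
  rw [← Finset.sum_add_sum_compl B] at h1 h2
  have hB' := mem_intrinsicInterior_convexHull (B.map (Function.Embedding.subtype _))
    (Finset.map_nonempty.2 hB0) (fun p => W p / s) (by
      intro p hp
      obtain ⟨q, hq, rfl⟩ := Finset.mem_map.1 hp
      have : W q = y.1 q := hWy q
      exact div_pos (this ▸ hy1 q hq) hs0) (by
      rw [Finset.sum_map, ← Finset.sum_div, div_eq_one_iff_eq hs0.ne']
      exact Finset.sum_congr rfl fun q _ => hWy q)
  have hC' := mem_intrinsicInterior_convexHull (Bᶜ.map (Function.Embedding.subtype _))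
    (Finset.map_nonempty.2 hC0) (fun p => - W p / s) (by
      intro p hp
      obtain ⟨q, hq, rfl⟩ := Finset.mem_map.1 hp
      have : W q = y.1 q := hWy q
      have h3 := hy2 q (Finset.mem_compl.1 hq)
      exact div_pos (by change 0 < - W q; linarith) hs0) (by
      rw [Finset.sum_map, ← Finset.sum_div, div_eq_one_iff_eq hs0.ne', Finset.sum_neg_distrib]
      have : ∑ q ∈ Bᶜ, W (Function.Embedding.subtype _ q) = ∑ q ∈ Bᶜ, y.1 q :=
        Finset.sum_congr rfl fun q _ => hWy q
      rw [this]; linarith)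
  refine ⟨_, hB', ?_⟩
  convert hC' using 1
  have e1 : ∑ q ∈ B, (W (Function.Embedding.subtype _ q) / s) •
      (Function.Embedding.subtype _ q : Pt d) = s⁻¹ • ∑ q ∈ B, y.1 q • (q : Pt d) := by
    rw [Finset.smul_sum]
    refine Finset.sum_congr rfl fun q _ => ?_
    rw [smul_smul, ← hWy q, div_eq_inv_mul]; rfl
  have e2 : ∑ q ∈ Bᶜ, (- W (Function.Embedding.subtype _ q) / s) •
      (Function.Embedding.subtype _ q : Pt d) = - (s⁻¹ • ∑ q ∈ Bᶜ, y.1 q • (q : Pt d)) := by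
    rw [Finset.smul_sum, ← Finset.sum_neg_distrib]
    refine Finset.sum_congr rfl fun q _ => ?_
    rw [smul_smul, ← hWy q, div_eq_inv_mul, mul_neg, neg_smul]; rfl
  rw [Finset.sum_map, Finset.sum_map, e1, e2, eq_neg_of_add_eq_zero_left h2, smul_neg]

/-- The dependence that expresses `v` as a convex combination of the other points. -/
lemma exists_dependence_nonneg {d : ℕ} {P : Finset (Pt d)} {v : Pt d} (hvP : v ∈ P)
    (hv : v ∈ convexHull ℝ ((P : Set (Pt d)) \ {v})) :
    ∃ x₀ : LinearMap.ker (dependenceMap P), x₀ ≠ 0 ∧ ∀ i, i ≠ ⟨v, hvP⟩ → 0 ≤ gale P i x₀ := by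
  rw [← Finset.coe_erase, Finset.mem_convexHull'] at hv
  obtain ⟨w, hw0, hw1, hwv⟩ := hv
  set W : Pt d → ℝ := fun p => if p = v then -1 else w p with hW
  have hWw : ∀ p ∈ P.erase v, W p = w p := by
    intro p hp; simp [hW, Finset.ne_of_mem_erase hp]
  have hWv : W v = -1 := by simp [hW]
  have hW1 : ∑ p ∈ P.erase v, W p = 1 := (Finset.sum_congr rfl hWw).trans hw1
  have hW2 : ∑ p ∈ P.erase v, W p • p = v :=
    (Finset.sum_congr rfl fun p hp => by rw [hWw p hp]).trans hwv
  refine ⟨⟨fun p => W p, ?_⟩, ?_, ?_⟩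
  · rw [LinearMap.mem_ker, dependenceMap_apply, Finset.sum_coe_sort P W,
      Finset.sum_coe_sort P (fun p => W p • p), ← Finset.add_sum_erase P _ hvP,
      ← Finset.add_sum_erase P _ hvP, hW1, hW2, hWv]
    simp
  · intro h
    have h' := congrFun (congrArg Subtype.val h) ⟨v, hvP⟩
    simp [hW] at h'
  · intro i hi
    have hi' : (i : Pt d) ≠ v := fun h => hi (Subtype.ext h)
    have hiP : (i : Pt d) ∈ P.erase v := Finset.mem_erase.2 ⟨hi', i.2⟩
    rw [gale_apply]
    change 0 ≤ W i
    rw [hWw _ hiP]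
    exact hw0 _ hiP

lemma card_image_le_ncard {d k : ℕ} (hk : 0 < k) (P : Finset (Pt d)) :
    ((Finset.univ.filter fun B : Finset P => IsSection (gale P) B ∧ k ≤ B.card ∧
      k ≤ Bᶜ.card).image fun B => s(B, Bᶜ)).card ≤ (crossingPartitions d P k).ncard := by
  set Q := ((Finset.univ.filter fun B : Finset P => IsSection (gale P) B ∧ k ≤ B.card ∧
      k ≤ Bᶜ.card).image fun B => s(B, Bᶜ)) with hQ
  let ι : Finset P → Finset (Pt d) := Finset.map (Function.Embedding.subtype _)
  have hι : Function.Injective (Sym2.map ι) := Sym2.map.injective (Finset.map_injective _)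
  have hfin : (crossingPartitions d P k).Finite := by
    refine (Finset.finite_toSet P.powerset.sym2).subset ?_
    rintro _ ⟨B, C, rfl, hBC, -⟩
    rw [Finset.mem_coe, Finset.mk_mem_sym2_iff, Finset.mem_powerset, Finset.mem_powerset, ← hBC]
    exact ⟨Finset.subset_union_left, Finset.subset_union_right⟩
  have hsub : ((Q.image (Sym2.map ι) : Finset _) : Set (Sym2 (Finset (Pt d)))) ⊆
      crossingPartitions d P k := by
    intro p hp
    obtain ⟨q, hq, rfl⟩ := Finset.mem_image.1 (Finset.mem_coe.1 hp)
    obtain ⟨B, hB, rfl⟩ := Finset.mem_image.1 hq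
    obtain ⟨-, hB1, hB2, hB3⟩ := Finset.mem_filter.1 hB
    refine ⟨ι B, ι Bᶜ, rfl, ?_, ?_, ?_, ?_, crosses_of_isSection hB1 ?_ ?_⟩
    · ext p
      simp [ι, ← exists_or, em]
    · exact (Finset.disjoint_map _).2 disjoint_compl_right
    · rwa [Finset.card_map]
    · rwa [Finset.card_map]
    · exact Finset.card_pos.1 (hk.trans_le hB2)
    · exact Finset.card_pos.1 (hk.trans_le hB3)
  rw [← Finset.card_image_of_injective Q hι, ← Set.ncard_coe_finset]
  exact Set.ncard_le_ncard hsub hfin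

/-- If one of `d + 5` points in general position in `ℝ^d` lies in the convex hull
of the others, there are `Ω(d²)` crossing partitions with both parts of size at
least `⌈(d+3)/2⌉`. -/
theorem crossing_partitions_nonconvex :
    ∃ (c : ℝ) (d₀ : ℕ), 0 < c ∧
      ∀ d : ℕ, d₀ ≤ d → ∀ P : Finset (Pt d), P.card = d + 5 → GenPos d P →
        (∃ v ∈ P, v ∈ convexHull ℝ ((P : Set (Pt d)) \ {v})) →
        c * d ^ 2 ≤ ((crossingPartitions d P ((d + 3 + 1) / 2)).ncard : ℝ) := by
  refine ⟨1 / 24, 0, by norm_num, fun d _ P hP hG ⟨v, hvP, hv⟩ => ?_⟩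
  obtain ⟨x₀, hx₀, hx₀v⟩ := exists_dependence_nonneg hvP hv
  have hcard : Fintype.card P - 1 = d + 4 := by rw [Fintype.card_coe, hP]; rfl
  have h1 := (galePos_gale hP hG).choose_two_le (finrank_dependences hP hG)
    (by omega) ⟨v, hvP⟩ x₀ hx₀ hx₀v
  rw [hcard] at h1
  have h2 := card_image_le_ncard (k := (d + 3 + 1) / 2) (by omega) P
  have h3 : (d + 4).choose 2 ≤ 12 * (crossingPartitions d P ((d + 3 + 1) / 2)).ncard := by
    rw [show (d + 3 + 1) / 2 = (d + 4) / 2 by omega] at h2 ⊢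
    refine h1.trans (Nat.mul_le_mul_left 12 (le_trans (le_of_eq ?_) h2))
    -- The two sides differ only in their decidability instances.
    congr!
  generalize (crossingPartitions d P ((d + 3 + 1) / 2)).ncard = N at h3 ⊢
  have h4 : (((d + 4).choose 2 : ℕ) : ℝ) ≤ ((12 * N : ℕ) : ℝ) := Nat.cast_le.2 h3
  rw [Nat.cast_choose_two] at h4
  push_cast at h4
  have hd : (0 : ℝ) ≤ d := Nat.cast_nonneg d
  nlinarith
end
end
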